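/- arXiv:1306.3598 — 4 statements merged into one kernel-verified Lean document; each statement's English description precedes it below -/
import Mathlib

section
/- For every real number s with 0 < s < 3/2 there exists a compact set E ⊂ [0,1]² with Hausdorff dimension equal to s such that the 3-dimensional Lebesgue measure of T_2(E) is zero. Consequently the optimal exponent α_{2,2}, defined as the infimum of those α for which dim_H(E) > α implies that T_2(E) has positive 3-dimensional Lebesgue measure, satisfies α_{2,2} ≥ 3/2. -/
open MeasureTheory Metric Set Topology
open scoped ENNReal

noncomputable section

/-- `ℝ^d` as Euclidean space. -/
abbrev Pt (d : ℕ) := EuclideanSpace ℝ (Fin d)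

/-- The index set of pairs `i < j` in `{1, …, k+1}`; it has `k(k+1)/2` elements. -/
abbrev PairIdx (k : ℕ) : Type := {p : Fin (k+1) × Fin (k+1) // p.1 < p.2}

/-- The map sending a `(k+1)`-tuple of points to its vector of pairwise distances. -/
def simplexMap (d k : ℕ) (x : Fin (k+1) → Pt d) : PairIdx k → ℝ :=
  fun p => dist (x p.1.1) (x p.1.2)

/-- A `(k+1)`-tuple is nondegenerate if `x^2 - x^1, …, x^{k+1} - x^1` are linearly
independent. -/
def Nondeg (d k : ℕ) (x : Fin (k+1) → Pt d) : Prop :=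
  LinearIndependent ℝ (fun i : Fin k => x i.succ - x 0)

/-- `T_k(E)`: the set of congruence classes of nondegenerate `k`-simplices with vertices in `E`,
realized as a subset of `ℝ^{k(k+1)/2}` via the pairwise-distance map. -/
def Tconf (d k : ℕ) (E : Set (Pt d)) : Set (PairIdx k → ℝ) :=
  simplexMap d k '' {x | (∀ i, x i ∈ E) ∧ Nondeg d k x}

/-- integer formed by the first `n` binary digits -/
def pre (a : ℕ → Fin 2) : ℕ → ℕ
  | 0 => 0
  | n + 1 => 2 * pre a n + (a n : ℕ)

lemma pre_lt (a : ℕ → Fin 2) (n : ℕ) : pre a n < 2 ^ n := by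
  induction n with
  | zero => simp [pre]
  | succ n ih => have := (a n).isLt; simp only [pre, pow_succ]; omega

lemma pre_eq (a : ℕ → Fin 2) (n : ℕ) :
    ∑ i ∈ Finset.range n, Real.ofDigitsTerm a i = (pre a n : ℝ) * ((2 : ℝ) ^ n)⁻¹ := by
  induction n with
  | zero => simp [pre]
  | succ n ih =>
    rw [Finset.sum_range_succ, ih, Real.ofDigitsTerm]
    simp only [pre]; push_cast; field_simp; ring

lemma pre_le (a : ℕ → Fin 2) (n : ℕ) : (pre a n : ℝ) * ((2 : ℝ) ^ n)⁻¹ ≤ Real.ofDigits a := by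
  rw [Real.ofDigits_eq_sum_add_ofDigits a n, pre_eq]
  have := Real.ofDigits_nonneg (fun i ↦ a (i + n))
  push_cast
  have : 0 ≤ ((2:ℝ)^n)⁻¹ * Real.ofDigits (fun i ↦ a (i + n)) := by positivity
  linarith

lemma le_pre (a : ℕ → Fin 2) (n : ℕ) :
    Real.ofDigits a ≤ (pre a n : ℝ) * ((2 : ℝ) ^ n)⁻¹ + ((2 : ℝ) ^ n)⁻¹ := by
  rw [Real.ofDigits_eq_sum_add_ofDigits a n, pre_eq]
  have := Real.ofDigits_le_one (fun i ↦ a (i + n))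
  push_cast
  gcongr
  exact mul_le_of_le_one_right (by positivity) this

lemma pre_gap (a : ℕ → Fin 2) {n m : ℕ} (hnm : n ≤ m) (h : ∀ i, n ≤ i → i < m → a i = 0) :
    (pre a m : ℝ) * ((2 : ℝ) ^ m)⁻¹ = (pre a n : ℝ) * ((2 : ℝ) ^ n)⁻¹ := by
  induction m, hnm using Nat.le_induction with
  | base => rfl
  | succ m hm ih =>
    rw [← ih (fun i h1 h2 => h i h1 (by omega))]
    simp only [pre, h m hm (by omega)]
    push_cast
    simp
    field_simp
    ring

/-- spread the digits of `a` over the positions in `P` -/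
def spread (P : ℕ → Prop) [DecidablePred P] (a : ℕ → Fin 2) (n : ℕ) : Fin 2 :=
  if P n then a (Nat.count P n) else 0

lemma spread_cmp (P : ℕ → Prop) [DecidablePred P] (a b : ℕ → Fin 2) (n : ℕ) :
    (pre (spread P a) n = pre (spread P b) n ∧ pre a (Nat.count P n) = pre b (Nat.count P n)) ∨
    (pre (spread P a) n < pre (spread P b) n ∧ pre a (Nat.count P n) < pre b (Nat.count P n) ∧
      pre b (Nat.count P n) + pre (spread P a) n ≤ pre a (Nat.count P n) + pre (spread P b) n) ∨
    (pre (spread P b) n < pre (spread P a) n ∧ pre b (Nat.count P n) < pre a (Nat.count P n) ∧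
      pre a (Nat.count P n) + pre (spread P b) n ≤ pre b (Nat.count P n) + pre (spread P a) n) := by
  induction n with
  | zero => simp [pre]
  | succ n ih =>
    rw [Nat.count_succ]
    by_cases h : P n
    · simp only [h, if_true, pre, spread]
      have := (a (Nat.count P n)).isLt
      have := (b (Nat.count P n)).isLt
      omega
    · simp only [h, if_false, pre, spread]
      simp only [Fin.coe_ofNat_eq_mod, add_zero]
      omega

lemma spread_abs (P : ℕ → Prop) [DecidablePred P] (a b : ℕ → Fin 2) (n : ℕ)
    (h : |Real.ofDigits (spread P a) - Real.ofDigits (spread P b)| ≤ ((2 : ℝ) ^ n)⁻¹) :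
    |Real.ofDigits a - Real.ofDigits b| ≤ 4 * ((2 : ℝ) ^ (Nat.count P n))⁻¹ := by
  have h1 := pre_le (spread P a) n
  have h2 := le_pre (spread P a) n
  have h3 := pre_le (spread P b) n
  have h4 := le_pre (spread P b) n
  have k1 := pre_le a (Nat.count P n)
  have k2 := le_pre a (Nat.count P n)
  have k3 := pre_le b (Nat.count P n)
  have k4 := le_pre b (Nat.count P n)
  set e := ((2 : ℝ) ^ n)⁻¹ with he
  set f := ((2 : ℝ) ^ (Nat.count P n))⁻¹ with hf
  have e0 : 0 < e := by positivity
  have f0 : 0 < f := by positivity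
  rw [abs_le] at h
  have c1 : (pre (spread P a) n : ℝ) ≤ pre (spread P b) n + 2 := by
    by_contra hc; push Not at hc; nlinarith
  have c2 : (pre (spread P b) n : ℝ) ≤ pre (spread P a) n + 2 := by
    by_contra hc; push Not at hc; nlinarith
  norm_cast at c1 c2
  have hc := spread_cmp P a b n
  have d1 : pre a (Nat.count P n) ≤ pre b (Nat.count P n) + 2 := by omega
  have d2 : pre b (Nat.count P n) ≤ pre a (Nat.count P n) + 2 := by omega
  have d1' : (pre a (Nat.count P n) : ℝ) ≤ pre b (Nat.count P n) + 2 := by exact_mod_cast d1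
  have d2' : (pre b (Nat.count P n) : ℝ) ≤ pre a (Nat.count P n) + 2 := by exact_mod_cast d2
  rw [abs_le]
  constructor <;> nlinarith

/-- Hölder estimate -/
lemma spread_holder (P : ℕ → Prop) [DecidablePred P] {r : ℝ} (hr : 0 < r) {C : ℝ}
    (hC : ∀ n : ℕ, r * n - C ≤ Nat.count P n) (a b : ℕ → Fin 2) :
    |Real.ofDigits a - Real.ofDigits b| ≤ (4 * (2:ℝ) ^ (C + r)) *
      |Real.ofDigits (spread P a) - Real.ofDigits (spread P b)| ^ r := by
  have key : ∀ n : ℕ, |Real.ofDigits (spread P a) - Real.ofDigits (spread P b)| ≤ ((2 : ℝ) ^ n)⁻¹ →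
      |Real.ofDigits a - Real.ofDigits b| ≤ 4 * (2:ℝ) ^ C * ((2:ℝ) ^ (-r)) ^ n := by
    intro n hn
    refine (spread_abs P a b n hn).trans ?_
    rw [mul_assoc]
    gcongr
    rw [← Real.rpow_natCast, ← Real.rpow_natCast, ← Real.rpow_mul (by norm_num),
      ← Real.rpow_add (by norm_num), ← Real.rpow_neg (by norm_num)]
    apply Real.rpow_le_rpow_of_exponent_le (by norm_num)
    linarith [hC n]
  set t := |Real.ofDigits (spread P a) - Real.ofDigits (spread P b)| with ht
  have ht0 : 0 ≤ t := abs_nonneg _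
  rcases ht0.eq_or_lt with h0 | h0
  · rw [← h0, Real.zero_rpow hr.ne', mul_zero]
    have hl : Filter.Tendsto (fun n : ℕ => 4 * (2:ℝ) ^ C * ((2:ℝ) ^ (-r)) ^ n) Filter.atTop (𝓝 (4 * (2:ℝ) ^ C * 0)) := by
      apply Filter.Tendsto.const_mul
      apply tendsto_pow_atTop_nhds_zero_of_lt_one (by positivity)
      exact Real.rpow_lt_one_of_one_lt_of_neg (by norm_num) (by linarith)
    rw [mul_zero] at hl
    apply ge_of_tendsto' hl
    intro n
    apply key n
    rw [← h0]; positivity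
  · have h1 : t ≤ 1 := by
      rw [ht, abs_le]
      have := Real.ofDigits_nonneg (spread P a)
      have := Real.ofDigits_le_one (spread P a)
      have := Real.ofDigits_nonneg (spread P b)
      have := Real.ofDigits_le_one (spread P b)
      constructor <;> linarith
    obtain ⟨n, hn1, hn2⟩ := exists_nat_pow_near_of_lt_one h0 h1 (y := (1/2 : ℝ)) (by norm_num) (by norm_num)
    have h3 := key n (by rw [← inv_pow]; simpa using hn2)
    refine h3.trans ?_
    have h4 : (((1:ℝ)/2) ^ (n+1)) ^ r ≤ t ^ r := by
      apply Real.rpow_le_rpow (by positivity) hn1.le hr.le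
    have h5 : (((1:ℝ)/2) ^ (n+1)) ^ r * (2:ℝ) ^ r = ((2:ℝ) ^ (-r)) ^ n := by
      rw [one_div, inv_pow, ← Real.rpow_natCast, ← Real.rpow_natCast, ← Real.rpow_neg (by norm_num),
        ← Real.rpow_mul (by norm_num), ← Real.rpow_mul (by norm_num), ← Real.rpow_add (by norm_num)]
      congr 1
      push_cast; ring
    rw [← h5, Real.rpow_add (by norm_num)]
    have : (0:ℝ) < 4 * (2:ℝ)^C * 2^r := by positivity
    nlinarith

/-- allowed digit positions -/
def Pos (L : ℝ) (n : ℕ) : Prop := ∀ i : ℕ, i.factorial ≤ n → L * (i.factorial : ℝ) ≤ n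

lemma pos_density {L : ℝ} (hL : 1 < L) [DecidablePred (Pos L)] {r : ℝ} (hr : 0 < r)
    (hrL : r * L < 1) : ∃ C : ℝ, ∀ n : ℕ, r * n - C ≤ Nat.count (Pos L) n := by
  obtain ⟨k, hk⟩ := exists_nat_gt (L / (1 - r * L))
  have h1 : 0 < 1 - r * L := by linarith
  rw [div_lt_iff₀ h1] at hk
  have hr1 : r < 1 := by nlinarith
  refine ⟨r * (k+1).factorial + 3, fun n => ?_⟩
  rcases lt_or_ge n (k+1).factorial with hn | hn
  · have : (n : ℝ) ≤ (k+1).factorial := by exact_mod_cast hn.le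
    have : r * n ≤ r * (k+1).factorial := by gcongr
    have : (0:ℝ) ≤ Nat.count (Pos L) n := by positivity
    linarith
  obtain ⟨i, hi1, hi2, hi3⟩ : ∃ i : ℕ, k + 1 ≤ i ∧ i.factorial ≤ n ∧ n < (i+1).factorial := by
    have hkn : k + 1 ≤ n := (Nat.self_le_factorial _).trans hn
    refine ⟨Nat.findGreatest (fun i => i.factorial ≤ n) n, ?_, ?_, ?_⟩
    · exact Nat.le_findGreatest hkn hn
    · exact Nat.findGreatest_spec (P := fun i => i.factorial ≤ n) hkn hn
    · by_contra hc
      push Not at hc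
      have := Nat.le_findGreatest (P := fun i => i.factorial ≤ n)
        ((Nat.self_le_factorial _).trans hc) hc
      omega
  obtain ⟨j, rfl⟩ : ∃ j, i = j + 1 := ⟨i - 1, by omega⟩
  have hkj : (k : ℝ) ≤ j := by exact_mod_cast (by omega : k ≤ j)
  set F : ℝ := (j.factorial : ℝ) with hF
  have hF0 : 1 ≤ F := by rw [hF]; exact_mod_cast Nat.one_le_of_lt (Nat.factorial_pos j)
  have hG : ((j+1).factorial : ℝ) = (j + 1) * F := by rw [Nat.factorial_succ]; push_cast; rfl
  set G : ℝ := ((j+1).factorial : ℝ) with hGdef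
  set s1 := Finset.Ico ⌈L * F⌉₊ (j+1).factorial with hs1
  set s2 := Finset.Ico ⌈L * G⌉₊ n with hs2
  have hF1 : ∀ i ≤ j, (i.factorial : ℝ) ≤ F := fun i hi => by
    rw [hF]; exact_mod_cast Nat.factorial_le hi
  have hG1 : ∀ i ≤ j + 1, (i.factorial : ℝ) ≤ G := fun i hi => by
    rw [hGdef]; exact_mod_cast Nat.factorial_le hi
  have hdisj : Disjoint s1 s2 := by
    rw [Finset.disjoint_left]
    intro m hm hm'
    simp only [hs1, hs2, Finset.mem_Ico] at hm hm'
    have := Nat.ceil_le.1 hm'.1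
    have h3 : (m : ℝ) < G := by rw [hGdef]; exact_mod_cast hm.2
    nlinarith
  have hsub : s1 ∪ s2 ⊆ {x ∈ Finset.range n | Pos L x} := by
    intro m hm
    rw [Finset.mem_union] at hm
    simp only [Finset.mem_filter, Finset.mem_range]
    rcases hm with hm | hm
    · simp only [hs1, Finset.mem_Ico] at hm
      refine ⟨by omega, fun i hi => ?_⟩
      have : i ≤ j := by
        by_contra hc
        have := Nat.factorial_le (show j + 1 ≤ i by omega)
        omega
      have := hF1 i this
      have := Nat.ceil_le.1 hm.1
      nlinarith
    · simp only [hs2, Finset.mem_Ico] at hm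
      refine ⟨by omega, fun i hi => ?_⟩
      have : i ≤ j + 1 := by
        by_contra hc
        have := Nat.factorial_le (show j + 1 + 1 ≤ i by omega)
        omega
      have := hG1 i this
      have := Nat.ceil_le.1 hm.1
      nlinarith
  have hcard := Finset.card_le_card hsub
  rw [Finset.card_union_of_disjoint hdisj, ← Nat.count_eq_card_filter_range, hs1, hs2,
    Nat.card_Ico, Nat.card_Ico] at hcard
  have hc1 : (j+1).factorial ≤ ((j+1).factorial - ⌈L * F⌉₊) + ⌈L * F⌉₊ := by omega
  have hc2 : n ≤ (n - ⌈L * G⌉₊) + ⌈L * G⌉₊ := by omega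
  have e1 : (⌈L * F⌉₊ : ℝ) < L * F + 1 := Nat.ceil_lt_add_one (by positivity)
  have e2 : (⌈L * G⌉₊ : ℝ) < L * G + 1 := Nat.ceil_lt_add_one (by positivity)
  have hc1' : G ≤ (((j+1).factorial - ⌈L * F⌉₊ : ℕ) : ℝ) + ⌈L * F⌉₊ := by
    rw [hGdef]; exact_mod_cast hc1
  have hc2' : (n : ℝ) ≤ ((n - ⌈L * G⌉₊ : ℕ) : ℝ) + ⌈L * G⌉₊ := by exact_mod_cast hc2
  have hcard' : (((j+1).factorial - ⌈L * F⌉₊ : ℕ) : ℝ) + ((n - ⌈L * G⌉₊ : ℕ) : ℝ) ≤ Nat.count (Pos L) n := by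
    exact_mod_cast hcard
  have hx : (0:ℝ) ≤ ((n - ⌈L * G⌉₊ : ℕ) : ℝ) := by positivity
  have hLF : L * F ≤ (1 - r * L) * G := by
    rw [hG]
    have : L ≤ (1 - r * L) * (j + 1) := by nlinarith
    nlinarith
  have hrk : 0 ≤ r * (k+1).factorial := by positivity
  have hGc : r * L * G - 1 ≤ (((j+1).factorial - ⌈L * F⌉₊ : ℕ) : ℝ) := by linarith
  rcases le_total (n : ℝ) (L * G) with h | h
  · have : r * n ≤ r * (L * G) := by gcongr
    linarith
  · have : r * (n - L * G) ≤ 1 * (n - L * G) := by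
      apply mul_le_mul_of_nonneg_right hr1.le; linarith
    linarith

/-- the Cantor set is close to a grid -/
lemma spread_grid {L : ℝ} (hL : 1 < L) [DecidablePred (Pos L)] (a : ℕ → Fin 2) (i : ℕ) :
    ∃ k : ℕ, k ≤ 2 ^ i.factorial ∧
      |Real.ofDigits (spread (Pos L) a) - (k : ℝ) * ((2:ℝ) ^ i.factorial)⁻¹| ≤
        ((2:ℝ) ^ ⌈L * i.factorial⌉₊)⁻¹ := by
  refine ⟨pre (spread (Pos L) a) i.factorial, (pre_lt _ _).le, ?_⟩
  have hle : i.factorial ≤ ⌈L * i.factorial⌉₊ := by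
    have : (i.factorial : ℝ) ≤ ⌈L * i.factorial⌉₊ := by
      refine le_trans ?_ (Nat.le_ceil _)
      have : (0:ℝ) ≤ i.factorial := by positivity
      nlinarith
    exact_mod_cast this
  rw [← pre_gap (spread (Pos L) a) hle]
  · rw [abs_le]
    have := pre_le (spread (Pos L) a) ⌈L * i.factorial⌉₊
    have := le_pre (spread (Pos L) a) ⌈L * i.factorial⌉₊
    have : (0:ℝ) < ((2:ℝ) ^ ⌈L * i.factorial⌉₊)⁻¹ := by positivity
    constructor <;> linarith
  · intro m h1 h2
    have h3 : ¬ Pos L m := fun h => by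
      have := h i h1
      rw [Nat.lt_ceil] at h2
      linarith
    simp [spread, h3]

/-- coding map -/
def cmap (P : ℕ → Prop) [DecidablePred P] (c : Fin 2 → ℕ → Fin 2) : Pt 2 :=
  WithLp.toLp 2 (fun j => Real.ofDigits (spread P (c j)))

lemma cmap_apply (P : ℕ → Prop) [DecidablePred P] (c : Fin 2 → ℕ → Fin 2) (j : Fin 2) :
    cmap P c j = Real.ofDigits (spread P (c j)) := rfl

lemma spread_cont (P : ℕ → Prop) [DecidablePred P] : Continuous (spread P) := by
  refine continuous_pi fun n => ?_
  unfold spread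
  by_cases h : P n
  · simp only [h, if_true]; exact continuous_apply _
  · simp only [h, if_false]; exact continuous_const

lemma cmap_cont (P : ℕ → Prop) [DecidablePred P] : Continuous (cmap P) := by
  unfold cmap
  refine (PiLp.continuous_toLp 2 _).comp (continuous_pi fun j => ?_)
  exact Real.continuous_ofDigits.comp ((spread_cont P).comp (continuous_apply j))

lemma coord_le_dist (x y : Pt 2) (j : Fin 2) : |x j - y j| ≤ dist x y := by
  rw [dist_eq_norm, ← Real.norm_eq_abs]
  exact PiLp.norm_apply_le (x - y) j

lemma dist_le_coord (x y : Pt 2) {e : ℝ} (h : ∀ j, |x j - y j| ≤ e) : dist x y ≤ 2 * e := by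
  have h0 := h 0
  have h1 := h 1
  have he : 0 ≤ e := (abs_nonneg _).trans h0
  rw [EuclideanSpace.dist_eq]
  apply Real.sqrt_le_iff.2
  refine ⟨by positivity, ?_⟩
  simp only [Fin.sum_univ_two, Real.dist_eq]
  have := pow_le_pow_left₀ (abs_nonneg _) h0 2
  have := pow_le_pow_left₀ (abs_nonneg _) h1 2
  nlinarith

lemma lower_dim (P : ℕ → Prop) [DecidablePred P] {r : ℝ} (hr : 0 < r) {C : ℝ}
    (hC : ∀ n : ℕ, r * n - C ≤ Nat.count P n) :
    ENNReal.ofReal (2 * r) ≤ dimH (range (cmap P)) := by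
  set D : ℝ := 4 * (2:ℝ) ^ (C + r) with hD
  have hD0 : 0 < D := by positivity
  let code : Pt 2 → (Fin 2 → ℕ → Fin 2) := Function.invFun (cmap P)
  let ψ : (Fin 2 → ℕ → Fin 2) → (Fin 2 → ℝ) := fun c j => Real.ofDigits (c j)
  have hψ : ∀ c c', dist (ψ c) (ψ c') ≤ D * dist (cmap P c) (cmap P c') ^ r := by
    intro c c'
    rw [dist_pi_le_iff (by positivity)]
    intro j
    rw [Real.dist_eq]
    refine (spread_holder P hr hC (c j) (c' j)).trans ?_
    rw [← hD]
    gcongr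
    exact coord_le_dist (cmap P c) (cmap P c') j
  have hcode : ∀ c, cmap P (code (cmap P c)) = cmap P c := fun c =>
    Function.invFun_eq ⟨c, rfl⟩
  have hold : HolderOnWith D.toNNReal r.toNNReal (fun x => ψ (code x)) (range (cmap P)) := by
    rintro _ ⟨c, rfl⟩ _ ⟨c', rfl⟩
    have h1 := hψ (code (cmap P c)) (code (cmap P c'))
    rw [hcode, hcode] at h1
    rw [edist_dist, edist_dist, Real.coe_toNNReal _ hr.le, ENNReal.ofReal_rpow_of_nonneg dist_nonneg hr.le]
    change _ ≤ ENNReal.ofReal D * _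
    rw [← ENNReal.ofReal_mul hD0.le]
    exact ENNReal.ofReal_le_ofReal h1
  have him : Icc (0 : Fin 2 → ℝ) 1 ⊆ (fun x => ψ (code x)) '' (range (cmap P)) := by
    intro y hy
    have : ∀ j, ∃ a : ℕ → Fin 2, Real.ofDigits a = y j := by
      intro j
      obtain ⟨a, -, ha⟩ := Real.ofDigits_SurjOn (b := 2) (by norm_num) (show y j ∈ Icc (0:ℝ) 1 from ⟨hy.1 j, hy.2 j⟩)
      exact ⟨a, ha⟩
    choose c hc using this
    refine ⟨cmap P c, ⟨c, rfl⟩, ?_⟩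
    have h1 := hψ (code (cmap P c)) c
    rw [hcode, dist_self, Real.zero_rpow hr.ne', mul_zero] at h1
    have h2 := dist_le_zero.1 h1
    simp only [h2]
    funext j
    exact hc j
  have hdim : dimH (Icc (0 : Fin 2 → ℝ) 1) = 2 := by
    rw [Real.dimH_of_nonempty_interior]
    · simp
    · refine ⟨fun _ => 1/2, ?_⟩
      rw [← pi_univ_Icc, interior_pi_set finite_univ]
      simp only [mem_pi, interior_Icc]
      intro i _
      constructor <;> norm_num
  have h := (dimH_mono him).trans (hold.dimH_image_le (by simpa using hr))
  rw [hdim] at h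
  have hr' : (r.toNNReal : ℝ≥0∞) = ENNReal.ofReal r := rfl
  rw [hr', ENNReal.le_div_iff_mul_le (Or.inl (by simpa using hr)) (Or.inl ENNReal.ofReal_ne_top)] at h
  rw [ENNReal.ofReal_mul (by norm_num)]
  simpa using h

/-- grid points -/
def gpt (N : ℕ) (k : Fin 2 → ℤ) : Pt 2 := WithLp.toLp 2 (fun j => (k j : ℝ) * ((2:ℝ) ^ N)⁻¹)

lemma cmap_grid {L : ℝ} (hL : 1 < L) [DecidablePred (Pos L)] (i : ℕ) {x : Pt 2}
    (hx : x ∈ range (cmap (Pos L))) :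
    ∃ k : Fin 2 → Fin (2 ^ i.factorial + 1), dist x (gpt i.factorial (fun j => ((k j : ℕ) : ℤ))) ≤
        2 * ((2:ℝ) ^ ⌈L * i.factorial⌉₊)⁻¹ := by
  obtain ⟨c, rfl⟩ := hx
  have := fun j => spread_grid hL (c j) i
  choose k hk1 hk2 using this
  refine ⟨fun j => ⟨k j, Nat.lt_succ_of_le (hk1 j)⟩, dist_le_coord _ _ fun j => ?_⟩
  simpa [gpt, cmap_apply] using hk2 j

lemma upper_dim {s L : ℝ} (hs : 0 < s) (hs2 : s < 3 / 2) (hLdef : L = 2 / s)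
    [DecidablePred (Pos L)] :
    dimH (range (cmap (Pos L))) ≤ ENNReal.ofReal s := by
  have hL : 1 < L := by rw [hLdef, lt_div_iff₀ hs]; linarith
  have hfac : Filter.Tendsto (fun i : ℕ => i.factorial) Filter.atTop Filter.atTop :=
    Filter.tendsto_atTop_mono Nat.self_le_factorial Filter.tendsto_id
  have hM : ∀ i : ℕ, L * i.factorial ≤ ⌈L * i.factorial⌉₊ := fun i => Nat.le_ceil _
  have hM' : ∀ i : ℕ, i.factorial ≤ ⌈L * i.factorial⌉₊ := fun i => by
    have : (i.factorial : ℝ) ≤ ⌈L * i.factorial⌉₊ := by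
      refine le_trans ?_ (hM i)
      have : (0:ℝ) ≤ i.factorial := by positivity
      nlinarith
    exact_mod_cast this
  have key : μH[s] (range (cmap (Pos L))) ≤ ENNReal.ofReal (4 * 4 ^ s) := by
    let e : ℕ → ℝ := fun i => 4 * ((2:ℝ) ^ ⌈L * i.factorial⌉₊)⁻¹
    let t : (i : ℕ) → (Fin 2 → Fin (2 ^ i.factorial + 1)) → Set (Pt 2) := fun i k =>
      Metric.closedBall (gpt i.factorial (fun j => ((k j : ℕ) : ℤ)))
        (2 * ((2:ℝ) ^ ⌈L * i.factorial⌉₊)⁻¹)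
    have hdiam : ∀ i k, Metric.ediam (t i k) ≤ ENNReal.ofReal (e i) := by
      intro i k
      refine Metric.ediam_le fun x hx y hy => ?_
      rw [edist_dist]
      apply ENNReal.ofReal_le_ofReal
      have h1 := Metric.mem_closedBall.1 hx
      have h2 := Metric.mem_closedBall'.1 hy
      have := dist_triangle x (gpt i.factorial (fun j => ((k j : ℕ) : ℤ))) y
      simp only [e]; linarith
    have h := Measure.hausdorffMeasure_le_liminf_sum s (range (cmap (Pos L))) (l := Filter.atTop)
      (fun i => ENNReal.ofReal (e i)) (by
        rw [← ENNReal.ofReal_zero]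
        apply ENNReal.tendsto_ofReal
        have : Filter.Tendsto (fun i : ℕ => 4 * ((1/2:ℝ)) ^ ⌈L * i.factorial⌉₊) Filter.atTop (𝓝 (4 * 0)) := by
          apply Filter.Tendsto.const_mul
          exact (tendsto_pow_atTop_nhds_zero_of_lt_one (by norm_num) (by norm_num)).comp
            (Filter.tendsto_atTop_mono hM' hfac)
        simpa [e] using this) t
      (Filter.Eventually.of_forall fun i k => hdiam i k)
      (Filter.Eventually.of_forall fun i x hx => by
        obtain ⟨k, hk⟩ := cmap_grid hL i hx
        exact mem_iUnion.2 ⟨k, hk⟩)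
    refine h.trans ?_
    refine (Filter.liminf_le_liminf (v := fun _ => ENNReal.ofReal (4 * 4 ^ s)) (Filter.Eventually.of_forall fun i => ?_)).trans (by simp)
    calc ∑ k, Metric.ediam (t i k) ^ s ≤ ∑ k : (Fin 2 → Fin (2 ^ i.factorial + 1)), ENNReal.ofReal (e i ^ s) := by
          refine Finset.sum_le_sum fun k _ => ?_
          rw [← ENNReal.ofReal_rpow_of_nonneg (by simp only [e]; positivity) hs.le]
          gcongr
          exact hdiam i k
      _ = ENNReal.ofReal (((2:ℝ) ^ i.factorial + 1) ^ 2 * e i ^ s) := by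
          rw [Finset.sum_const, Finset.card_univ, Fintype.card_fun, Fintype.card_fin, Fintype.card_fin,
            nsmul_eq_mul, ENNReal.ofReal_mul (by positivity)]
          congr 1
          rw [← ENNReal.ofReal_natCast]
          push_cast
          rfl
      _ ≤ ENNReal.ofReal (4 * 4 ^ s) := by
          apply ENNReal.ofReal_le_ofReal
          have h1 : ((2:ℝ) ^ i.factorial + 1) ^ 2 ≤ 4 * ((2:ℝ) ^ i.factorial) ^ 2 := by
            have : (1:ℝ) ≤ 2 ^ i.factorial := one_le_pow₀ (by norm_num)
            nlinarith
          have h2 : ((2:ℝ) ^ i.factorial) ^ 2 * (((2:ℝ) ^ ⌈L * i.factorial⌉₊)⁻¹) ^ s ≤ 1 := by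
            rw [← Real.rpow_natCast 2 ⌈_⌉₊, ← Real.rpow_neg (by norm_num), ← Real.rpow_mul (by norm_num),
              ← pow_mul, ← Real.rpow_natCast, ← Real.rpow_add (by norm_num)]
            apply Real.rpow_le_one_of_one_le_of_nonpos (by norm_num)
            have h3 := mul_le_mul_of_nonneg_right (hM i) hs.le
            have h4 : L * i.factorial * s = 2 * i.factorial := by rw [hLdef]; field_simp
            push_cast
            linarith
          simp only [e]
          rw [Real.mul_rpow (by norm_num) (by positivity)]
          set u := (((2:ℝ) ^ ⌈L * i.factorial⌉₊)⁻¹) ^ s with hu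
          have hu0 : 0 ≤ u := by positivity
          calc _ ≤ 4 * ((2:ℝ) ^ i.factorial) ^ 2 * (4 ^ s * u) := by gcongr
            _ = 4 * 4 ^ s * (((2:ℝ) ^ i.factorial) ^ 2 * u) := by ring
            _ ≤ 4 * 4 ^ s * 1 := by gcongr
            _ = _ := by ring
  have : dimH (range (cmap (Pos L))) ≤ (s.toNNReal : ℝ≥0∞) := by
    apply dimH_le_of_hausdorffMeasure_ne_top
    rw [Real.coe_toNNReal _ hs.le]
    exact ne_top_of_le_ne_top ENNReal.ofReal_ne_top key
  exact this

lemma vol_le {L : ℝ} (hL : 1 < L) [DecidablePred (Pos L)] (i : ℕ) :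
    volume (Tconf 2 2 (range (cmap (Pos L)))) ≤
      ENNReal.ofReal ((2 * 2 ^ i.factorial + 1) ^ 4 * (8 * ((2:ℝ) ^ ⌈L * i.factorial⌉₊)⁻¹) ^ 3) := by
  set N := i.factorial with hN
  set e := ((2:ℝ) ^ ⌈L * N⌉₊)⁻¹ with he
  have he0 : 0 < e := by positivity
  let z : (Fin 2 → Fin 2 → Fin (2 * 2 ^ N + 1)) → Fin 3 → Pt 2 := fun c =>
    Fin.cons 0 (fun l => gpt N (fun j => ((c l j : ℕ) : ℤ) - 2 ^ N))
  have hsub : Tconf 2 2 (range (cmap (Pos L))) ⊆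
      ⋃ c, Metric.closedBall (simplexMap 2 2 (z c)) (4 * e) := by
    rintro _ ⟨x, ⟨hx, -⟩, rfl⟩
    have := fun l => cmap_grid hL i (hx l)
    choose k hk using this
    let p : Fin 3 → Pt 2 := fun l => gpt N (fun j => ((k l j : ℕ) : ℤ))
    have hp : ∀ l, dist (x l) (p l) ≤ 2 * e := hk
    let c : Fin 2 → Fin 2 → Fin (2 * 2 ^ N + 1) := fun l j =>
      ⟨(k l.succ j : ℕ) + 2 ^ N - (k 0 j : ℕ), by
        have : (k l.succ j : ℕ) < 2 ^ N + 1 := (k l.succ j).isLt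
        omega⟩
    have hz : ∀ l, z c l = p l - p 0 := by
      intro l
      refine Fin.cases ?_ (fun l => ?_) l
      · simp [z]
      · ext j
        simp only [z, Fin.cons_succ, p, gpt, c, PiLp.sub_apply]
        have h1 : (k 0 j : ℕ) < 2 ^ N + 1 := (k 0 j).isLt
        rw [Nat.cast_sub (by omega)]
        push_cast
        ring
    refine mem_iUnion.2 ⟨c, ?_⟩
    rw [Metric.mem_closedBall, dist_pi_le_iff (by positivity)]
    intro q
    simp only [simplexMap, hz, dist_sub_right]
    have h1 := hp q.1.1
    have h2 := hp q.1.2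
    have h3 := dist_dist_dist_le (x q.1.1) (x q.1.2) (p q.1.1) (p q.1.2)
    linarith
  refine (measure_mono hsub).trans ((measure_iUnion_le _).trans ?_)
  rw [tsum_fintype]
  have hcard : Fintype.card (PairIdx 2) = 3 := by decide
  simp only [Real.volume_pi_closedBall _ (show (0:ℝ) ≤ 4 * e by positivity), hcard]
  rw [Finset.sum_const, Finset.card_univ, Fintype.card_fun, Fintype.card_fun, Fintype.card_fin, Fintype.card_fin,
            nsmul_eq_mul, ENNReal.ofReal_mul (by positivity), ← ENNReal.ofReal_natCast]
  apply le_of_eq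
  congr 2
  · push_cast; ring
  · ring

lemma vol_zero {L : ℝ} (hL : 4 / 3 < L) [DecidablePred (Pos L)] :
    volume (Tconf 2 2 (range (cmap (Pos L)))) = 0 := by
  set θ : ℝ := 2 ^ (4 - 3 * L) with hθ
  have hfac : Filter.Tendsto (fun i : ℕ => i.factorial) Filter.atTop Filter.atTop :=
    Filter.tendsto_atTop_mono Nat.self_le_factorial Filter.tendsto_id
  have hlim : Filter.Tendsto (fun i : ℕ => ENNReal.ofReal (81 * 512 * θ ^ i.factorial)) Filter.atTop (𝓝 0) := by
    rw [← ENNReal.ofReal_zero]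
    apply ENNReal.tendsto_ofReal
    rw [show (0:ℝ) = 81 * 512 * 0 by norm_num]
    apply Filter.Tendsto.const_mul
    refine (tendsto_pow_atTop_nhds_zero_of_lt_one (by positivity) ?_).comp hfac
    exact Real.rpow_lt_one_of_one_lt_of_neg (by norm_num) (by linarith)
  apply le_antisymm _ (zero_le)
  refine ge_of_tendsto' hlim fun i => ?_
  refine (vol_le (by linarith) i).trans (ENNReal.ofReal_le_ofReal ?_)
  have h1 : (2 * (2:ℝ) ^ i.factorial + 1) ^ 4 ≤ (3 * 2 ^ i.factorial) ^ 4 := by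
    have : (1:ℝ) ≤ 2 ^ i.factorial := one_le_pow₀ (by norm_num)
    gcongr
    linarith
  have h2 : ((2:ℝ) ^ i.factorial) ^ 4 * (((2:ℝ) ^ ⌈L * i.factorial⌉₊)⁻¹) ^ 3 ≤ θ ^ i.factorial := by
    rw [hθ, inv_pow, ← pow_mul, ← pow_mul, ← Real.rpow_natCast, ← Real.rpow_natCast, ← Real.rpow_natCast,
      ← Real.rpow_neg (by norm_num), ← Real.rpow_mul (by norm_num), ← Real.rpow_add (by norm_num)]
    apply Real.rpow_le_rpow_of_exponent_le (by norm_num)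
    have := Nat.le_ceil (L * i.factorial)
    push_cast
    linarith
  calc _ ≤ (3 * (2:ℝ) ^ i.factorial) ^ 4 * (8 * ((2:ℝ) ^ ⌈L * i.factorial⌉₊)⁻¹) ^ 3 := by gcongr
    _ = 81 * 512 * (((2:ℝ) ^ i.factorial) ^ 4 * (((2:ℝ) ^ ⌈L * i.factorial⌉₊)⁻¹) ^ 3) := by ring
    _ ≤ _ := by gcongr

lemma part_one (s : ℝ) (hs : 0 < s) (hs2 : s < 3 / 2) :
      ∃ E : Set (Pt 2), IsCompact E ∧ E ⊆ {x : Pt 2 | ∀ i, x i ∈ Icc (0 : ℝ) 1} ∧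
        dimH E = ENNReal.ofReal s ∧ volume (Tconf 2 2 E) = 0 := by
  classical
  have hL : 1 < 2 / s := by rw [lt_div_iff₀ hs]; linarith
  refine ⟨range (cmap (Pos (2 / s))), isCompact_range (cmap_cont _), ?_, ?_, ?_⟩
  · rintro _ ⟨c, rfl⟩ j
    exact ⟨Real.ofDigits_nonneg _, Real.ofDigits_le_one _⟩
  · apply le_antisymm (upper_dim hs hs2 rfl)
    apply le_of_forall_lt
    intro x hx
    have hxt : x ≠ ∞ := (hx.trans ENNReal.ofReal_lt_top).ne
    lift x to NNReal using hxt
    have hxs : (x : ℝ) < s := by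
      rwa [← ENNReal.ofReal_coe_nnreal, ENNReal.ofReal_lt_ofReal_iff hs] at hx
    have hx0 : (0:ℝ) ≤ x := x.2
    have hr : 0 < ((x : ℝ) + s) / 4 := by linarith
    obtain ⟨C, hC⟩ := pos_density hL hr (by
      rw [mul_div_assoc', div_lt_one hs]; linarith)
    refine lt_of_lt_of_le ?_ (lower_dim (Pos (2/s)) hr hC)
    rw [← ENNReal.ofReal_coe_nnreal, ENNReal.ofReal_lt_ofReal_iff (by linarith)]
    linarith
  · apply vol_zero
    rw [lt_div_iff₀ hs]; linarith

theorem stmt6 :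
    (∀ s : ℝ, 0 < s → s < 3 / 2 →
      ∃ E : Set (Pt 2), IsCompact E ∧ E ⊆ {x : Pt 2 | ∀ i, x i ∈ Icc (0 : ℝ) 1} ∧
        dimH E = ENNReal.ofReal s ∧ volume (Tconf 2 2 E) = 0) ∧
    (3 : ℝ) / 2 ≤
      sInf {α : ℝ | ∀ E : Set (Pt 2), IsCompact E → ENNReal.ofReal α < dimH E →
        0 < volume (Tconf 2 2 E)} := by
  refine ⟨part_one, le_csInf ⟨2, ?_⟩ ?_⟩
  · intro E _ h
    have h1 : dimH E ≤ 2 := by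
      refine (dimH_mono (subset_univ E)).trans ?_
      rw [Real.dimH_univ_eq_finrank]
      simp
    exact absurd (h.trans_le h1) (by simp)
  · intro α hα
    by_contra hc
    push Not at hc
    obtain ⟨s, hs1, hs2⟩ := exists_between (max_lt hc (show (0:ℝ) < 3/2 by norm_num))
    have hs0 : 0 < s := (le_max_right _ _).trans_lt hs1
    obtain ⟨E, hE, -, hd, hv⟩ := part_one s hs0 hs2
    have := hα E hE (by
      rw [hd, ENNReal.ofReal_lt_ofReal_iff hs0]
      exact (le_max_left _ _).trans_lt hs1)
    rw [hv] at this
    exact lt_irrefl _ this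
end
end

section
/- Let E ⊂ ℝ^d, d ≥ 2, be a compact set with Hausdorff dimension greater than (d+1)/2. Then the distance set Δ(E) = {|x−y| : x, y ∈ E} has positive one-dimensional Lebesgue measure. -/
open MeasureTheory Metric Set Topology
open scoped ENNReal
noncomputable section

/-- The distance set `Δ(E) = {|x - y| : x, y ∈ E} ⊆ ℝ`. -/
def distSet (d : ℕ) (E : Set (Pt d)) : Set ℝ :=
  {r : ℝ | ∃ x ∈ E, ∃ y ∈ E, dist x y = r}

namespace FalconerAux

lemma saturate {X ι : Type*} [DecidableEq X] (I : Finset ι) (P : ι → X → Prop)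
    [∀ i, DecidablePred (P i)] (c : ι → ℝ) (hc : ∀ i, 0 ≤ c i)
    (F : Finset X) (hF : ∀ x ∈ F, ∃ i ∈ I, P i x) :
    ∃ w : X → ℝ, (∀ x, 0 ≤ w x) ∧ (∀ i ∈ I, ∑ x ∈ F with P i x, w x ≤ c i) ∧
      ∀ x ∈ F, ∃ i ∈ I, P i x ∧ ∑ y ∈ F with P i y, w y = c i := by
  induction F using Finset.induction_on with
  | empty => exact ⟨fun _ => 0, by simp, by simpa using fun i _ => hc i, by simp⟩
  | insert a F ha ih =>
    obtain ⟨w, hw0, hw1, hw2⟩ := ih (fun x hx => hF x (Finset.mem_insert_of_mem hx))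
    obtain ⟨i0, hi0, hPi0⟩ := hF a (Finset.mem_insert_self _ _)
    obtain ⟨k, hk, hkmin⟩ := Finset.exists_min_image (I.filter (fun i => P i a))
      (fun i => c i - ∑ x ∈ F with P i x, w x) ⟨i0, by simp [hi0, hPi0]⟩
    rw [Finset.mem_filter] at hk
    set τ := c k - ∑ x ∈ F with P k x, w x with hτ
    have hτ0 : 0 ≤ τ := sub_nonneg.2 (hw1 k hk.1)
    have key : ∀ i, ∑ x ∈ insert a F with P i x, Function.update w a τ x
        = (if P i a then τ else 0) + ∑ x ∈ F with P i x, w x := by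
      intro i
      have h1 : ∑ x ∈ F with P i x, Function.update w a τ x = ∑ x ∈ F with P i x, w x := by
        apply Finset.sum_congr rfl
        intro x hx
        have : x ≠ a := by rintro rfl; exact ha (Finset.mem_filter.1 hx).1
        simp [this]
      rw [Finset.filter_insert]
      split_ifs with h
      · rw [Finset.sum_insert (by simp [ha]), h1]; simp
      · rw [h1, zero_add]
    have hle : ∀ i ∈ I, ∑ x ∈ insert a F with P i x, Function.update w a τ x ≤ c i := by
      intro i hi
      rw [key]
      split_ifs with h
      · have := hkmin i (by simp [hi, h])
        linarith
      · simpa using hw1 i hi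
    refine ⟨Function.update w a τ, ?_, hle, ?_⟩
    · intro x
      by_cases h : x = a
      · subst h; simpa using hτ0
      · simpa [h] using hw0 x
    · intro x hx
      rcases Finset.mem_insert.1 hx with rfl | hx
      · refine ⟨k, hk.1, hk.2, ?_⟩
        rw [key, if_pos hk.2]; simp [hτ]
      · obtain ⟨i, hi, hPi, he⟩ := hw2 x hx
        refine ⟨i, hi, hPi, le_antisymm (hle i hi) ?_⟩
        rw [key, he]
        split_ifs <;> simp [hτ0]

lemma content {X : Type} [MetricSpace X] [MeasurableSpace X] [BorelSpace X] {E : Set X}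
    {s : ℝ} (h : Measure.hausdorffMeasure s E ≠ 0) :
    ∃ r0 : ℝ, 0 < r0 ∧ ∃ c : ℝ, 0 < c ∧ ∀ (ι : Type) [Fintype ι] (t : ι → Set X),
      (∀ i, ediam (t i) ≤ ENNReal.ofReal r0) → E ⊆ ⋃ i, t i →
      ENNReal.ofReal c ≤ ∑ i, ediam (t i) ^ s := by
  by_contra! H
  have H' : ∀ n : ℕ, ∃ (ι : Type) (_ : Fintype ι) (t : ι → Set X),
      (∀ i, ediam (t i) ≤ ENNReal.ofReal (1 / ((n : ℝ) + 1))) ∧ E ⊆ ⋃ i, t i ∧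
      ∑ i, ediam (t i) ^ s < ENNReal.ofReal (1 / ((n : ℝ) + 1)) := fun n =>
    H (1 / ((n : ℝ) + 1)) (by positivity) (1 / ((n : ℝ) + 1)) (by positivity)
  choose ι hι t h1 h2 h3 using H'
  have hlim : Filter.Tendsto (fun n : ℕ => ENNReal.ofReal (1 / ((n : ℝ) + 1))) Filter.atTop (𝓝 0) := by
    rw [← ENNReal.ofReal_zero]
    exact ENNReal.tendsto_ofReal tendsto_one_div_add_atTop_nhds_zero_nat
  have := Measure.hausdorffMeasure_le_liminf_sum s E
    (fun n : ℕ => ENNReal.ofReal (1 / ((n : ℝ) + 1))) hlim t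
    (Filter.Eventually.of_forall h1) (Filter.Eventually.of_forall h2)
  apply h
  refine le_antisymm (this.trans ?_) zero_le
  rw [← hlim.liminf_eq]
  exact Filter.liminf_le_liminf (Filter.Eventually.of_forall fun n => (h3 n).le)

lemma ediam_cb {X : Type} [MetricSpace X] (x : X) (r : ℝ) :
    ediam (closedBall x r) ≤ ENNReal.ofReal (2 * r) := by
  apply Metric.ediam_le
  intro y hy z hz
  rw [edist_dist]
  apply ENNReal.ofReal_le_ofReal
  rw [mem_closedBall] at hy hz
  linarith [dist_triangle_right y z x]

lemma frostman {X : Type} [MetricSpace X] [MeasurableSpace X] [BorelSpace X] {E : Set X}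
    (hE : IsCompact E) {s : ℝ} (hs : 0 < s) (h : Measure.hausdorffMeasure s E ≠ 0) :
    ∃ C : ℝ, 0 < C ∧ ∀ δ : ℝ, 0 < δ → ∃ (F : Finset X) (w : X → ℝ), (F : Set X) ⊆ E ∧
      (∀ x, 0 ≤ w x) ∧ ∑ x ∈ F, w x = 1 ∧
      ∀ z r, δ ≤ r → ∑ x ∈ F with dist x z ≤ r, w x ≤ C * r ^ s := by
  classical
  obtain ⟨r0, hr0, c, hc, hcov⟩ := content h
  set ρ := r0 / 12 with hρ
  have hρ0 : 0 < ρ := by positivity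
  refine ⟨4 ^ s * (12 ^ s / c) + (2 / ρ) ^ s, by positivity, fun δ hδ => ?_⟩
  obtain ⟨n, hn⟩ := exists_pow_lt_of_lt_one (show (0 : ℝ) < δ / ρ by positivity)
    (show (1 / 2 : ℝ) < 1 by norm_num)
  set R : ℕ → ℝ := fun k => ρ * (1 / 2) ^ k with hR
  have hRpos : ∀ k, 0 < R k := fun k => by simp only [hR]; positivity
  have hRanti : Antitone R := fun a b hab => by
    simp only [hR]
    exact mul_le_mul_of_nonneg_left
      (pow_le_pow_of_le_one (by norm_num) (by norm_num) hab) hρ0.le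
  have hRn : R n < δ := by
    rw [lt_div_iff₀ hρ0] at hn
    simp only [hR]; linarith
  obtain ⟨F0, hF0E, hF0fin, hF0cov⟩ := hE.finite_cover_balls (hRpos n)
  lift F0 to Finset X using hF0fin
  obtain ⟨w, hw0, hwle, hwsat⟩ := saturate (F0 ×ˢ Finset.range (n + 1))
    (fun (i : X × ℕ) x => dist x i.1 ≤ R i.2) (fun i => R i.2 ^ s)
    (fun i => (Real.rpow_pos_of_pos (hRpos _) s).le) F0
    (fun x hx => ⟨(x, n), by simpa using hx, by simpa using (hRpos n).le⟩)
  -- saturated balls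
  set T : Set (X × ℕ) := {i | i ∈ F0 ×ˢ Finset.range (n + 1) ∧
    ∑ y ∈ F0 with dist y i.1 ≤ R i.2, w y = R i.2 ^ s} with hT
  obtain ⟨u, huT, hudisj, hucov⟩ :=
    Vitali.exists_disjoint_subfamily_covering_enlargement_closedBall T (fun i => i.1)
      (fun i => R i.2) ρ (fun i _ => by
        have := hRanti (Nat.zero_le i.2); simpa [hR] using this) 5 (by norm_num)
  have hufin : u.Finite := by
    apply Set.Finite.subset (F0 ×ˢ Finset.range (n + 1)).finite_toSet
    intro i hi
    exact (huT hi).1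
  lift u to Finset (X × ℕ) using hufin
  have hsum : c ≤ 12 ^ s * ∑ i ∈ u, R i.2 ^ s := by
    have h1 := hcov u (fun i => closedBall i.1.1 (6 * R i.1.2)) ?_ ?_
    · have h2 : ∀ i : u, ediam (closedBall i.1.1 (6 * R i.1.2)) ^ s
          ≤ ENNReal.ofReal (12 ^ s * R i.1.2 ^ s) := by
        intro i
        rw [← Real.mul_rpow (by norm_num) (hRpos _).le, ← ENNReal.ofReal_rpow_of_nonneg
          (by have := hRpos i.1.2; positivity) hs.le]
        gcongr
        refine (ediam_cb _ _).trans ?_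
        apply ENNReal.ofReal_le_ofReal
        linarith
      have h3 := h1.trans (Finset.sum_le_sum fun i _ => h2 i)
      rw [← ENNReal.ofReal_sum_of_nonneg (fun i _ => by have := hRpos i.1.2; positivity),
        ENNReal.ofReal_le_ofReal_iff
          (Finset.sum_nonneg fun i _ => by have := hRpos i.1.2; positivity),
        ← Finset.mul_sum, Finset.sum_coe_sort u (fun i => R i.2 ^ s)] at h3
      exact h3
    · intro i
      refine (ediam_cb _ _).trans ?_
      apply ENNReal.ofReal_le_ofReal
      have := hRanti (Nat.zero_le i.1.2)
      simp [hR] at this ⊢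
      linarith
    · intro x hx
      obtain ⟨y, hy, hxy⟩ := Set.mem_iUnion₂.1 (hF0cov hx)
      obtain ⟨i, hi, hPi, he⟩ := hwsat y (by simpa using hy)
      obtain ⟨b, hb, hsub⟩ := hucov i ⟨hi, he⟩
      have hyb := hsub (show y ∈ closedBall i.1 (R i.2) from hPi)
      refine Set.mem_iUnion.2 ⟨⟨b, hb⟩, ?_⟩
      rw [mem_closedBall] at hyb ⊢
      rw [mem_ball] at hxy
      have hbn : b.2 ≤ n := by
        have := (huT hb).1
        simp at this; omega
      have := hRanti hbn
      have := dist_triangle x y b.1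
      linarith
  have hM : ∑ i ∈ u, R i.2 ^ s ≤ ∑ x ∈ F0, w x := by
    have h1 : ∑ i ∈ u, R i.2 ^ s = ∑ i ∈ u, ∑ y ∈ F0 with dist y i.1 ≤ R i.2, w y :=
      Finset.sum_congr rfl fun i hi => ((huT hi).2).symm
    rw [h1, ← Finset.sum_biUnion]
    · apply Finset.sum_le_sum_of_subset_of_nonneg
      · intro x hx
        simp at hx
        obtain ⟨_, _, _, hx, _⟩ := hx
        exact hx
      · intro x _ _; exact hw0 x
    · intro i hi j hj hij
      have := hudisj hi hj hij
      rw [Function.onFun, Finset.disjoint_left]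
      intro x hx hx'
      rw [Finset.mem_filter] at hx hx'
      exact Set.disjoint_left.1 this hx.2 hx'.2
  set M := ∑ x ∈ F0, w x with hMdef
  have hMc : c ≤ 12 ^ s * M := hsum.trans (by gcongr)
  have hMpos : 0 < M := by
    have : (0:ℝ) < 12 ^ s := by positivity
    by_contra hneg
    nlinarith
  have hMinv : M⁻¹ ≤ 12 ^ s / c := by
    rw [inv_le_comm₀ hMpos (by positivity), inv_div, div_le_iff₀ (by positivity)]
    linarith
  refine ⟨F0, fun x => w x * M⁻¹, hF0E, fun x => mul_nonneg (hw0 x) (by positivity), ?_, ?_⟩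
  · rw [← Finset.sum_mul, mul_inv_cancel₀ hMpos.ne']
  · intro z r hr
    have hrpos : 0 < r := hδ.trans_le hr
    rw [← Finset.sum_mul]
    by_cases hrρ : ρ ≤ 2 * r
    · have h1 : (∑ x ∈ F0 with dist x z ≤ r, w x) ≤ M :=
        Finset.sum_le_sum_of_subset_of_nonneg (Finset.filter_subset _ _) fun x _ _ => hw0 x
      have h2 : (∑ x ∈ F0 with dist x z ≤ r, w x) * M⁻¹ ≤ 1 := by
        rw [← div_eq_mul_inv, div_le_one hMpos]; exact h1
      refine h2.trans ?_
      have h3 : 1 ≤ (2 / ρ) ^ s * r ^ s := by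
        rw [← Real.mul_rpow (by positivity) hrpos.le]
        apply Real.one_le_rpow _ hs.le
        rw [div_mul_eq_mul_div, le_div_iff₀ hρ0]; linarith
      have : 0 ≤ 4 ^ s * (12 ^ s / c) * r ^ s := by positivity
      linarith [add_mul (4 ^ s * (12 ^ s / c)) ((2 / ρ) ^ s) (r ^ s)]
    · push Not at hrρ
      have hex : ∃ k, R k < 2 * r := ⟨n, by linarith⟩
      have hkn : Nat.find hex ≤ n := Nat.find_min' hex (by linarith)
      have hkspec := Nat.find_spec hex
      have hkmin := fun m => Nat.find_min hex (m := m)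
      set k := Nat.find hex with hkdef
      have hk0 : k ≠ 0 := by
        intro h0
        rw [h0] at hkspec
        simp [hR] at hkspec
        linarith
      obtain ⟨m, hm⟩ := Nat.exists_eq_succ_of_ne_zero hk0
      have hm1 : 2 * r ≤ R m := not_lt.1 (hkmin m (by omega))
      have hm2 : R m < 4 * r := by
        have : R k = R m / 2 := by simp only [hR, hm, pow_succ]; ring
        linarith
      have h1 : (∑ x ∈ F0 with dist x z ≤ r, w x) ≤ (4 * r) ^ s := by
        by_cases hne : ∃ x' ∈ F0, dist x' z ≤ r
        · obtain ⟨x', hx', hd⟩ := hne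
          refine le_trans ?_ ((hwle (x', m) (by simp [hx']; omega)).trans
            (Real.rpow_le_rpow (hRpos _).le hm2.le hs.le))
          apply Finset.sum_le_sum_of_subset_of_nonneg
          · intro x hx
            rw [Finset.mem_filter] at hx ⊢
            refine ⟨hx.1, ?_⟩
            have := dist_triangle_right x x' z
            dsimp only
            linarith [hx.2]
          · intro x _ _; exact hw0 x
        · rw [Finset.filter_false_of_mem]
          · simp; positivity
          · intro x hx hd
            exact hne ⟨x, hx, hd⟩
      calc (∑ x ∈ F0 with dist x z ≤ r, w x) * M⁻¹ ≤ (4 * r) ^ s * (12 ^ s / c) := by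
            gcongr
        _ = 4 ^ s * (12 ^ s / c) * r ^ s := by
            rw [Real.mul_rpow (by norm_num) hrpos.le]; ring
        _ ≤ _ := by
            rw [add_mul]
            have : 0 ≤ (2 / ρ) ^ s * r ^ s := by positivity
            linarith

lemma gauss_form {V : Type*} [NormedAddCommGroup V] [InnerProductSpace ℝ V]
    [FiniteDimensional ℝ V] [MeasurableSpace V] [BorelSpace V] {ι : Type*} (s : Finset ι)
    (v : ι → V) (c : ι → ℂ) :
    Integrable (fun z : V => Real.exp (-Real.pi * ‖z‖ ^ 2) *
      ‖∑ i ∈ s, c i * Complex.exp ((2 * Real.pi * inner ℝ (v i) z : ℝ) * Complex.I)‖ ^ 2) ∧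
    ((∫ z : V, Real.exp (-Real.pi * ‖z‖ ^ 2) *
      ‖∑ i ∈ s, c i * Complex.exp ((2 * Real.pi * inner ℝ (v i) z : ℝ) * Complex.I)‖ ^ 2 : ℝ) : ℂ)
      = ∑ i ∈ s, ∑ j ∈ s, c i * (starRingEnd ℂ) (c j) *
        (Real.exp (-Real.pi * ‖v i - v j‖ ^ 2) : ℝ) := by
  set f : V → ℝ := fun z => Real.exp (-Real.pi * ‖z‖ ^ 2) *
      ‖∑ i ∈ s, c i * Complex.exp ((2 * Real.pi * inner ℝ (v i) z : ℝ) * Complex.I)‖ ^ 2 with hf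
  have hb : 0 < ((Real.pi : ℂ)).re := by simpa using Real.pi_pos
  have hpt : ∀ z, (f z : ℂ) = ∑ i ∈ s, ∑ j ∈ s, c i * (starRingEnd ℂ) (c j) *
      Complex.exp (-(Real.pi : ℂ) * ‖z‖ ^ 2 + (2 * Real.pi * Complex.I) * inner ℝ (v i - v j) z) := by
    intro z
    have h1 : ((‖∑ i ∈ s, c i * Complex.exp ((2 * Real.pi * inner ℝ (v i) z : ℝ) * Complex.I)‖ ^ 2 : ℝ) : ℂ)
      = (∑ i ∈ s, c i * Complex.exp ((2 * Real.pi * inner ℝ (v i) z : ℝ) * Complex.I)) *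
        (starRingEnd ℂ) (∑ i ∈ s, c i * Complex.exp ((2 * Real.pi * inner ℝ (v i) z : ℝ) * Complex.I)) := by
      rw [Complex.mul_conj, Complex.normSq_eq_norm_sq]
    simp only [hf]
    rw [Complex.ofReal_mul, h1, map_sum, Finset.sum_mul_sum, Finset.mul_sum]
    refine Finset.sum_congr rfl fun i _ => ?_
    rw [Finset.mul_sum]
    refine Finset.sum_congr rfl fun j _ => ?_
    rw [map_mul, ← Complex.exp_conj, map_mul, Complex.conj_I, Complex.conj_ofReal,
      Complex.ofReal_exp, inner_sub_left]
    have : ∀ a b e x y : ℂ, Complex.exp a * (x * Complex.exp b * (y * Complex.exp e))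
        = x * y * Complex.exp (a + (b + e)) := by
      intros; rw [Complex.exp_add, Complex.exp_add]; ring
    rw [this]
    congr 2
    push_cast
    ring
  have hint1 : ∀ i j, Integrable (fun z : V => c i * (starRingEnd ℂ) (c j) *
      Complex.exp (-(Real.pi : ℂ) * ‖z‖ ^ 2 + (2 * Real.pi * Complex.I) * inner ℝ (v i - v j) z)) :=
    fun i j => (GaussianFourier.integrable_cexp_neg_mul_sq_norm_add hb _ _).const_mul _
  have hintC : Integrable (fun z => (f z : ℂ)) := by
    simp_rw [hpt]
    exact integrable_finsetSum _ fun i _ => integrable_finsetSum _ fun j _ => hint1 i j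
  refine ⟨by simpa using hintC.re, ?_⟩
  rw [← integral_complex_ofReal, integral_congr_ae (Filter.Eventually.of_forall hpt)]
  rw [integral_finsetSum _ fun i _ => integrable_finsetSum _ fun j _ => hint1 i j]
  refine Finset.sum_congr rfl fun i _ => ?_
  rw [integral_finsetSum _ fun j _ => hint1 i j]
  refine Finset.sum_congr rfl fun j _ => ?_
  rw [integral_const_mul, GaussianFourier.integral_cexp_neg_mul_sq_norm_add hb]
  congr 1
  have hpi : (Real.pi : ℂ) ≠ 0 := by exact_mod_cast Real.pi_ne_zero
  rw [div_self hpi, Complex.one_cpow, one_mul, Complex.ofReal_exp]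
  congr 1
  push_cast
  field_simp
  rw [Complex.I_sq]; ring

lemma gauss_sum {X : Type} [MetricSpace X] (F : Finset X) (w : X → ℝ) (hw : ∀ x, 0 ≤ w x)
    {s C δ t : ℝ} (hC : 0 < C) (ht : 0 < t) (htδ : δ * t ≤ 1) (z : X)
    (hF : ∀ r, δ ≤ r → ∑ x ∈ F with dist x z ≤ r, w x ≤ C * r ^ s) :
    ∑ x ∈ F, w x * Real.exp (-Real.pi * (2 * t * dist x z) ^ 2) ≤
      C * (∑' m : ℕ, Real.exp (-(m : ℝ)) * ((m : ℝ) + 1) ^ s) * t ^ (-s) := by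
  have hsummable : Summable (fun m : ℕ => Real.exp (-(m : ℝ)) * ((m : ℝ) + 1) ^ s) := by
    obtain ⟨k, hk⟩ := exists_nat_gt s
    have h1 := (Real.summable_pow_mul_exp_neg_nat_mul k (show (0:ℝ) < 1 by norm_num))
    have h2 := ((summable_nat_add_iff 1).2 h1).mul_left (Real.exp 1)
    refine Summable.of_nonneg_of_le (fun m => by positivity) (fun m => ?_) h2
    push_cast
    have h3 : Real.exp (-(m:ℝ)) = Real.exp 1 * Real.exp (-1 * ((m:ℝ) + 1)) := by
      rw [← Real.exp_add]; congr 1; ring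
    have h4 : ((m:ℝ) + 1) ^ s ≤ ((m:ℝ) + 1) ^ k := by
      rw [← Real.rpow_natCast]
      exact Real.rpow_le_rpow_of_exponent_le (by linarith [Nat.cast_nonneg (α := ℝ) m]) hk.le
    rw [h3, mul_assoc, mul_comm (((m:ℝ)+1)^k)]
    gcongr
  set fl : X → ℕ := fun x => ⌊t * dist x z⌋₊ with hfl
  have h1 : ∀ x, w x * Real.exp (-Real.pi * (2 * t * dist x z) ^ 2)
      ≤ w x * Real.exp (-(fl x : ℝ)) := by
    intro x
    apply mul_le_mul_of_nonneg_left _ (hw x)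
    apply Real.exp_le_exp.2
    have h2 : (fl x : ℝ) ≤ t * dist x z := Nat.floor_le (by positivity)
    have h3 : (fl x : ℝ) ≤ (fl x : ℝ) ^ 2 := by
      exact_mod_cast Nat.le_self_pow (by norm_num) (fl x)
    have h4 : (fl x : ℝ) ^ 2 ≤ (t * dist x z) ^ 2 := by gcongr
    nlinarith [Real.pi_gt_three, sq_nonneg (t * dist x z)]
  refine (Finset.sum_le_sum fun x _ => h1 x).trans ?_
  obtain ⟨N, hN⟩ : ∃ N : ℕ, ∀ x ∈ F, fl x < N := by
    obtain ⟨N, hN⟩ := (F.image fl).exists_nat_subset_range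
    exact ⟨N, fun x hx => Finset.mem_range.1 (hN (Finset.mem_image_of_mem _ hx))⟩
  rw [← Finset.sum_fiberwise_of_maps_to (s := F) (t := Finset.range N) (g := fl)
    (fun x hx => Finset.mem_range.2 (hN x hx))]
  have h5 : ∀ m ∈ Finset.range N, ∑ x ∈ F with fl x = m, w x * Real.exp (-(fl x : ℝ)) ≤
      C * t ^ (-s) * (Real.exp (-(m : ℝ)) * ((m : ℝ) + 1) ^ s) := by
    intro m _
    have h6 : ∑ x ∈ F with fl x = m, w x * Real.exp (-(fl x : ℝ))
        = (∑ x ∈ F with fl x = m, w x) * Real.exp (-(m : ℝ)) := by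
      rw [Finset.sum_mul]
      refine Finset.sum_congr rfl fun x hx => ?_
      rw [(Finset.mem_filter.1 hx).2]
    have h7 : ∑ x ∈ F with fl x = m, w x ≤ C * (((m:ℝ) + 1) / t) ^ s := by
      refine le_trans ?_ (hF (((m:ℝ) + 1) / t) ?_)
      · apply Finset.sum_le_sum_of_subset_of_nonneg
        · intro x hx
          rw [Finset.mem_filter] at hx ⊢
          refine ⟨hx.1, ?_⟩
          rw [le_div_iff₀ ht]
          have := Nat.lt_floor_add_one (t * dist x z)
          rw [← hx.2]
          simp only [hfl]
          linarith
        · intro x _ _; exact hw x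
      · rw [le_div_iff₀ ht]
        linarith [Nat.cast_nonneg (α := ℝ) m]
    rw [h6]
    rw [Real.div_rpow (by positivity) ht.le] at h7
    calc _ ≤ C * (((m:ℝ) + 1) ^ s / t ^ s) * Real.exp (-(m : ℝ)) := by gcongr
      _ = _ := by rw [Real.rpow_neg ht.le]; field_simp
  refine (Finset.sum_le_sum h5).trans ?_
  rw [← Finset.mul_sum]
  have h8 := hsummable.sum_le_tsum (Finset.range N) (fun m _ => by positivity)
  calc _ ≤ C * t ^ (-s) * (∑' m : ℕ, Real.exp (-(m : ℝ)) * ((m : ℝ) + 1) ^ s) := by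
        gcongr
    _ = _ := by ring

def ee (θ : ℝ) : ℂ := Complex.exp ((2 * Real.pi * θ : ℝ) * Complex.I)

lemma norm_ee (θ : ℝ) : ‖ee θ‖ = 1 := Complex.norm_exp_ofReal_mul_I _

lemma ee_add (a b : ℝ) : ee (a + b) = ee a * ee b := by
  rw [ee, ee, ee, ← Complex.exp_add]; congr 1; push_cast; ring

lemma norm_ee_sub_one (θ : ℝ) : ‖ee θ - 1‖ ≤ 2 * Real.pi * |θ| := by
  have := Real.norm_exp_I_mul_ofReal_sub_one_le (x := 2 * Real.pi * θ)
  rw [ee, mul_comm]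
  refine this.trans (le_of_eq ?_)
  rw [Real.norm_eq_abs, abs_mul, abs_of_pos (by positivity)]

@[fun_prop]
lemma continuous_ee : Continuous ee := by unfold ee; fun_prop

lemma cs_int {α : Type*} [MeasurableSpace α] (μ : Measure α) [IsFiniteMeasure μ] (f : α → ℝ)
    (hf : Integrable f μ) (hf2 : Integrable (fun x => f x ^ 2) μ) :
    (∫ x, f x ∂μ) ^ 2 ≤ μ.real univ * ∫ x, f x ^ 2 ∂μ := by
  by_cases hV : μ.real univ = 0
  · have : μ = 0 := by
      rw [← Measure.measure_univ_eq_zero]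
      simpa [Measure.real, ENNReal.toReal_eq_zero_iff] using hV
    subst this; simp
  have hVpos : 0 < μ.real univ := lt_of_le_of_ne measureReal_nonneg (Ne.symm hV)
  set V := μ.real univ
  set A := ∫ x, f x ∂μ
  have h0 : 0 ≤ ∫ x, (V * f x - A) ^ 2 ∂μ := integral_nonneg fun x => sq_nonneg _
  have h1 : ∫ x, (V * f x - A) ^ 2 ∂μ = V ^ 2 * ∫ x, f x ^ 2 ∂μ - 2 * V * A * A + A ^ 2 * V := by
    have : ∀ x, (V * f x - A) ^ 2 = V ^ 2 * f x ^ 2 - (2 * V * A) * f x + A ^ 2 := fun x => by ring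
    simp_rw [this]
    have hi : Integrable (fun x => V ^ 2 * f x ^ 2 - (2 * V * A) * f x) μ :=
      (hf2.const_mul _).sub (hf.const_mul _)
    rw [integral_add hi (integrable_const _),
      integral_sub (hf2.const_mul _) (hf.const_mul _), integral_const_mul, integral_const_mul]
    simp [A, V]; ring
  rw [h1] at h0
  by_contra hneg
  push Not at hneg
  nlinarith

lemma expsum_bound (d : ℕ) {R s C : ℝ} (hR : 1 ≤ R) (hC : 0 < C) :
    ∃ K η : ℝ, 0 < K ∧ 0 < η ∧ ∀ (δ : ℝ) (F : Finset (EuclideanSpace ℝ (Fin d)))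
      (w : EuclideanSpace ℝ (Fin d) → ℝ), (∀ x, 0 ≤ w x) → ∑ x ∈ F, w x = 1 →
      (∀ x ∈ F, ‖x‖ ≤ R) →
      (∀ z r, δ ≤ r → ∑ x ∈ F with dist x z ≤ r, w x ≤ C * r ^ s) →
      ∀ t : ℝ, 1 ≤ |t| → δ * |t| ≤ η →
      ‖∑ x ∈ F, ∑ y ∈ F, (w x * w y : ℝ) * ee (t * dist x y ^ 2)‖ ^ 2 ≤ K * |t| ^ (d - 2 * s) := by
  set η : ℝ := 1 / (8 * Real.pi * R) with hη
  have hpi := Real.pi_gt_three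
  have hη0 : 0 < η := by positivity
  have hη1 : η ≤ 1 := by
    rw [hη, div_le_one (by positivity)]; nlinarith
  set V1 := volume.real (ball (0 : EuclideanSpace ℝ (Fin d)) 1) with hV1
  have hV1pos : 0 < V1 := by
    rw [hV1, measureReal_def]
    exact ENNReal.toReal_pos (measure_ball_pos _ _ one_pos).ne' measure_ball_lt_top.ne
  set T := ∑' m : ℕ, Real.exp (-(m : ℝ)) * ((m : ℝ) + 1) ^ s with hT
  have hT0 : 0 ≤ T := tsum_nonneg fun m => by positivity
  set Q := Real.exp (Real.pi * (R + 1) ^ 2) with hQ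
  have hQ0 : 0 < Q := Real.exp_pos _
  refine ⟨V1⁻¹ * C * Q * 4 * C * (T + 1) * η ^ (s - d), η, by positivity, hη0, ?_⟩
  intro δ F w hw0 hw1 hFR hF t ht htδ
  have htpos : 0 < |t| := by linarith
  set ρ := η / |t| with hρ
  have hρ0 : 0 < ρ := by positivity
  have hρ1 : ρ ≤ 1 := by rw [hρ, div_le_one htpos]; linarith
  have hδρ : δ ≤ ρ := by rw [hρ, le_div_iff₀ htpos]; exact htδ
  set B := closedBall (0 : EuclideanSpace ℝ (Fin d)) ρ with hB
  have hBfin : IsFiniteMeasure (volume.restrict B) :=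
    isFiniteMeasure_restrict.2 measure_closedBall_lt_top.ne
  set V := volume.real B with hV
  have hVeq : V = ρ ^ d * V1 := by
    rw [hV, hB, Measure.addHaar_real_closedBall _ _ hρ0.le]; simp [hV1]
  have hVpos : 0 < V := by rw [hVeq]; positivity
  have hintB : ∀ {g : EuclideanSpace ℝ (Fin d) → ℂ}, Continuous g → IntegrableOn g B := fun hg =>
    hg.continuousOn.integrableOn_compact (isCompact_closedBall _ _)
  have hintBR : ∀ {g : EuclideanSpace ℝ (Fin d) → ℝ}, Continuous g → IntegrableOn g B := fun hg =>
    hg.continuousOn.integrableOn_compact (isCompact_closedBall _ _)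
  set v : EuclideanSpace ℝ (Fin d) → EuclideanSpace ℝ (Fin d) := fun y => (-2 * t) • y with hv
  set a : EuclideanSpace ℝ (Fin d) → ℂ := fun y => ee (t * ‖y‖ ^ 2) with ha
  set G : EuclideanSpace ℝ (Fin d) → ℂ := fun z => ∑ y ∈ F, w y * a y * ee (inner ℝ (v y) z) with hG
  set m : EuclideanSpace ℝ (Fin d) → ℂ := fun y => (V : ℂ)⁻¹ * ∫ h in B, ee (inner ℝ (v y) h) with hm
  have hVC : (V : ℂ) ≠ 0 := by exact_mod_cast hVpos.ne'
  have hm1 : ∀ y ∈ F, 1 / 2 ≤ ‖m y‖ := by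
    intro y hy
    have h1 : m y - 1 = (V : ℂ)⁻¹ * ∫ h in B, (ee (inner ℝ (v y) h) - 1) := by
      rw [integral_sub (hintB (by fun_prop)) (hintB (by fun_prop))]
      simp only [hm, setIntegral_const]
      rw [mul_sub, ← hV]
      congr 1
      simp [hVC]
    have h2 : ‖∫ h in B, (ee (inner ℝ (v y) h) - 1)‖ ≤ (1 / 2) * V := by
      apply norm_setIntegral_le_of_norm_le_const measure_closedBall_lt_top
      intro h hh
      refine (norm_ee_sub_one _).trans ?_
      have h3 : |inner ℝ (v y) h| ≤ ‖v y‖ * ‖h‖ := abs_real_inner_le_norm _ _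
      have h4 : ‖v y‖ = 2 * |t| * ‖y‖ := by simp [hv, norm_smul]
      have h5 : ‖h‖ ≤ ρ := by simpa [hB] using hh
      have h6 := hFR y hy
      calc 2 * Real.pi * |inner ℝ (v y) h| ≤ 2 * Real.pi * (2 * |t| * R * ρ) := by
            rw [h4] at h3
            have : 2 * |t| * ‖y‖ * ‖h‖ ≤ 2 * |t| * R * ρ := by gcongr
            gcongr
            linarith
        _ = 1 / 2 := by
            rw [hρ, hη]; field_simp; norm_num
    have h3 : ‖m y - 1‖ ≤ 1 / 2 := by
      rw [h1, norm_mul, norm_inv, Complex.norm_real, Real.norm_of_nonneg hVpos.le,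
        inv_mul_le_iff₀ hVpos]
      linarith
    have h4 : ‖(1 : ℂ)‖ ≤ ‖m y‖ + ‖m y - 1‖ := by
      have := norm_sub_le (m y) (m y - 1)
      simpa using this
    rw [norm_one] at h4
    linarith
  set b : EuclideanSpace ℝ (Fin d) → ℂ := fun y => w y * a y / m y with hb
  have hbn : ∀ y ∈ F, ‖b y‖ ≤ 2 * w y := by
    intro y hy
    have := hm1 y hy
    simp only [hb, ha]
    rw [norm_div, norm_mul, norm_ee, Complex.norm_real, Real.norm_of_nonneg (hw0 y), mul_one,
      div_le_iff₀ (by linarith)]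
    nlinarith [hw0 y]
  set H : EuclideanSpace ℝ (Fin d) → ℂ := fun z => ∑ y ∈ F, b y * ee (inner ℝ (v y) z) with hH
  have hHc : Continuous H := by
    simp only [hH]; fun_prop
  -- averaging
  have hGavg : ∀ x, G x = (V : ℂ)⁻¹ * ∫ h in B, H (x + h) := by
    intro x
    simp only [hH]
    rw [integral_finsetSum _ (fun y _ => hintB (by fun_prop)), Finset.mul_sum]
    simp only [hG]
    refine Finset.sum_congr rfl fun y hy => ?_
    have h1 : ∀ h, b y * ee (inner ℝ (v y) (x + h))
        = (b y * ee (inner ℝ (v y) x)) * ee (inner ℝ (v y) h) := by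
      intro h; rw [inner_add_right, ee_add]; ring
    simp_rw [h1]
    rw [integral_const_mul]
    have h2 : m y ≠ 0 := by
      intro h0; have := hm1 y hy; rw [h0, norm_zero] at this; norm_num at this
    have h3 : (∫ h in B, ee (inner ℝ (v y) h)) = V * m y := by
      simp only [hm]; field_simp
    rw [h3]
    simp only [hb]
    field_simp
  have hGsq : ∀ x, ‖G x‖ ^ 2 ≤ V⁻¹ * ∫ h in B, ‖H (x + h)‖ ^ 2 := by
    intro x
    have h1 : ‖G x‖ ≤ V⁻¹ * ∫ h in B, ‖H (x + h)‖ := by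
      rw [hGavg, norm_mul, norm_inv, Complex.norm_real, Real.norm_of_nonneg hVpos.le]
      gcongr
      exact norm_integral_le_integral_norm _
    have h2 := cs_int (volume.restrict B) (fun h => ‖H (x + h)‖)
      (hintBR (by fun_prop)) (hintBR (by fun_prop))
    have h3 : (volume.restrict B).real univ = V := by simp [hV]
    rw [h3] at h2
    calc ‖G x‖ ^ 2 ≤ (V⁻¹ * ∫ h in B, ‖H (x + h)‖) ^ 2 := by gcongr
      _ = V⁻¹ ^ 2 * (∫ h in B, ‖H (x + h)‖) ^ 2 := by ring
      _ ≤ V⁻¹ ^ 2 * (V * ∫ h in B, ‖H (x + h)‖ ^ 2) := by gcongr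
      _ = _ := by field_simp
  have htrans : ∀ x, ∫ h in B, ‖H (x + h)‖ ^ 2
      = ∫ z, (closedBall x ρ).indicator (fun z => ‖H z‖ ^ 2) z := by
    intro x
    rw [← integral_add_left_eq_self (μ := volume)
      ((closedBall x ρ).indicator (fun z => ‖H z‖ ^ 2)) x,
      ← integral_indicator isClosed_closedBall.measurableSet]
    congr 1
    ext h
    simp [Set.indicator, hB]
  -- main Gaussian integral
  have hgf := gauss_form F v b
  have hI : ∫ z, Real.exp (-Real.pi * ‖z‖ ^ 2) * ‖H z‖ ^ 2 ≤ 4 * (C * (T + 1) * |t| ^ (-s)) := by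
    have h1 : ∫ z, Real.exp (-Real.pi * ‖z‖ ^ 2) * ‖H z‖ ^ 2 ≤
        ‖((∫ z, Real.exp (-Real.pi * ‖z‖ ^ 2) * ‖H z‖ ^ 2 : ℝ) : ℂ)‖ := by
      rw [Complex.norm_real]; exact le_abs_self _
    refine h1.trans ?_
    have h2 : ((∫ z, Real.exp (-Real.pi * ‖z‖ ^ 2) * ‖H z‖ ^ 2 : ℝ) : ℂ) = _ := hgf.2
    rw [h2]
    have h3 : ∀ x ∈ F, ∑ y ∈ F, w y * Real.exp (-Real.pi * (2 * |t| * dist y x) ^ 2) ≤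
        C * (T + 1) * |t| ^ (-s) := by
      intro x _
      refine (gauss_sum F w hw0 hC htpos (htδ.trans hη1) x (hF x)).trans ?_
      gcongr
      linarith
    calc _ ≤ ∑ x ∈ F, ∑ y ∈ F, ‖b x * (starRingEnd ℂ) (b y) *
          (Real.exp (-Real.pi * ‖v x - v y‖ ^ 2) : ℝ)‖ :=
          (norm_sum_le _ _).trans (Finset.sum_le_sum fun x _ => norm_sum_le _ _)
      _ ≤ ∑ x ∈ F, ∑ y ∈ F, (2 * w x) * (2 * w y) *
          Real.exp (-Real.pi * (2 * |t| * dist y x) ^ 2) := by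
          refine Finset.sum_le_sum fun x hx => Finset.sum_le_sum fun y hy => ?_
          have e1 : ‖v x - v y‖ = 2 * |t| * dist y x := by
            simp only [hv]
            rw [← smul_sub, norm_smul, dist_comm, dist_eq_norm]; simp
          rw [norm_mul, norm_mul, RCLike.norm_conj, Complex.norm_real,
            Real.norm_of_nonneg (Real.exp_pos _).le, e1]
          have := hbn x hx
          have := hbn y hy
          have := hw0 x
          gcongr
      _ = 4 * ∑ x ∈ F, w x * ∑ y ∈ F, w y * Real.exp (-Real.pi * (2 * |t| * dist y x) ^ 2) := by
          rw [Finset.mul_sum]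
          refine Finset.sum_congr rfl fun x _ => ?_
          rw [Finset.mul_sum, Finset.mul_sum]
          refine Finset.sum_congr rfl fun y _ => ?_
          ring
      _ ≤ 4 * ∑ x ∈ F, w x * (C * (T + 1) * |t| ^ (-s)) := by
          gcongr with x hx
          · exact hw0 x
          · exact h3 x hx
      _ = _ := by rw [← Finset.sum_mul, hw1, one_mul]
  -- S in terms of G
  have hS : ∑ x ∈ F, ∑ y ∈ F, (w x * w y : ℝ) * ee (t * dist x y ^ 2)
      = ∑ x ∈ F, w x * a x * G x := by
    refine Finset.sum_congr rfl fun x _ => ?_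
    simp only [hG]
    rw [Finset.mul_sum]
    refine Finset.sum_congr rfl fun y _ => ?_
    have : t * dist x y ^ 2 = t * ‖x‖ ^ 2 + (t * ‖y‖ ^ 2 + inner ℝ (v y) x) := by
      rw [dist_eq_norm, norm_sub_sq_real]
      simp only [hv, inner_smul_left, real_inner_comm x y]
      simp
      ring
    rw [this, ee_add, ee_add]
    simp only [ha]
    push_cast
    ring
  have hS1 : ‖∑ x ∈ F, ∑ y ∈ F, (w x * w y : ℝ) * ee (t * dist x y ^ 2)‖ ^ 2
      ≤ ∑ x ∈ F, w x * ‖G x‖ ^ 2 := by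
    rw [hS]
    have h1 : ‖∑ x ∈ F, w x * a x * G x‖ ≤ ∑ x ∈ F, w x * ‖G x‖ := by
      refine (norm_sum_le _ _).trans (Finset.sum_le_sum fun x _ => ?_)
      simp only [ha]
      rw [norm_mul, norm_mul, norm_ee, Complex.norm_real, Real.norm_of_nonneg (hw0 x), mul_one]
    refine (pow_le_pow_left₀ (norm_nonneg _) h1 2).trans ?_
    exact Real.pow_arith_mean_le_arith_mean_pow F w _ (fun x _ => hw0 x) hw1
      (fun x _ => norm_nonneg _) 2
  have hindint : ∀ x, Integrable ((closedBall x ρ).indicator (fun z => ‖H z‖ ^ 2)) := by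
    intro x
    rw [integrable_indicator_iff isClosed_closedBall.measurableSet]
    exact (by fun_prop : Continuous fun z => ‖H z‖ ^ 2).continuousOn.integrableOn_compact
      (isCompact_closedBall _ _)
  have hS2 : ∑ x ∈ F, w x * ∫ z, (closedBall x ρ).indicator (fun z => ‖H z‖ ^ 2) z
      ≤ C * ρ ^ s * Q * ∫ z, Real.exp (-Real.pi * ‖z‖ ^ 2) * ‖H z‖ ^ 2 := by
    simp_rw [← integral_const_mul]
    rw [← integral_finsetSum _ (fun x _ => (hindint x).const_mul _)]
    apply integral_mono (integrable_finsetSum _ (fun x _ => (hindint x).const_mul _))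
      (hgf.1.const_mul _)
    intro z
    dsimp only
    have h1 : ∑ x ∈ F, w x * (closedBall x ρ).indicator (fun z => ‖H z‖ ^ 2) z
        = (∑ x ∈ F with dist x z ≤ ρ, w x) * ‖H z‖ ^ 2 := by
      rw [Finset.sum_mul, Finset.sum_filter]
      refine Finset.sum_congr rfl fun x _ => ?_
      simp only [Set.indicator, mem_closedBall, dist_comm z x]
      split_ifs <;> simp
    rw [h1]
    by_cases hne : ∃ x ∈ F, dist x z ≤ ρ
    · obtain ⟨x, hx, hxz⟩ := hne
      have h2 : ‖z‖ ≤ R + 1 := by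
        have := hFR x hx
        have h3 : ‖z‖ ≤ ‖x‖ + dist x z := by
          rw [dist_eq_norm]
          have := norm_sub_le x (x - z)
          simpa using this
        linarith
      have h3 : 1 ≤ Q * Real.exp (-Real.pi * ‖z‖ ^ 2) := by
        rw [hQ, ← Real.exp_add]
        apply Real.one_le_exp
        have : ‖z‖ ^ 2 ≤ (R + 1) ^ 2 := by gcongr
        nlinarith
      calc _ ≤ (C * ρ ^ s) * ‖H z‖ ^ 2 := by
            gcongr
            exact hF z ρ hδρ
        _ ≤ (C * ρ ^ s) * ‖H z‖ ^ 2 * (Q * Real.exp (-Real.pi * ‖z‖ ^ 2)) :=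
            le_mul_of_one_le_right (by positivity) h3
        _ = C * ρ ^ s * Q * (Real.exp (-Real.pi * ‖z‖ ^ 2) * ‖H z‖ ^ 2) := by ring
    · rw [Finset.filter_false_of_mem]
      · rw [Finset.sum_empty, zero_mul]
        exact (by positivity : 0 ≤ C * ρ ^ s * Q * (Real.exp (-Real.pi * ‖z‖ ^ 2) * ‖H z‖ ^ 2))
      · intro x hx hd
        exact hne ⟨x, hx, hd⟩
  calc _ ≤ ∑ x ∈ F, w x * ‖G x‖ ^ 2 := hS1
    _ ≤ ∑ x ∈ F, w x * (V⁻¹ * ∫ z, (closedBall x ρ).indicator (fun z => ‖H z‖ ^ 2) z) := by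
        refine Finset.sum_le_sum fun x _ => mul_le_mul_of_nonneg_left ?_ (hw0 x)
        rw [← htrans]; exact hGsq x
    _ = V⁻¹ * ∑ x ∈ F, w x * ∫ z, (closedBall x ρ).indicator (fun z => ‖H z‖ ^ 2) z := by
        rw [Finset.mul_sum]
        exact Finset.sum_congr rfl fun x _ => by ring
    _ ≤ V⁻¹ * (C * ρ ^ s * Q * (4 * (C * (T + 1) * |t| ^ (-s)))) := by
        have : 0 ≤ C * ρ ^ s * Q := by positivity
        gcongr
        exact hS2.trans (mul_le_mul_of_nonneg_left hI this)
    _ = V1⁻¹ * C * Q * 4 * C * (T + 1) * ((ρ ^ d)⁻¹ * ρ ^ s * |t| ^ (-s)) := by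
        rw [hVeq, mul_inv]; ring
    _ = _ := by
        have e1 : (ρ ^ d)⁻¹ * ρ ^ s = η ^ (s - d) * |t| ^ (d - s) := by
          have : |t| ^ (d - s) = (|t| ^ (s - d))⁻¹ := by
            rw [← Real.rpow_neg htpos.le]; congr 1; ring
          rw [this, ← div_eq_mul_inv, ← Real.div_rpow hη0.le htpos.le, ← hρ,
            Real.rpow_sub hρ0, Real.rpow_natCast]
          ring
        have e2 : |t| ^ ((d : ℝ) - 2 * s) = |t| ^ (d - s) * |t| ^ (-s) := by
          rw [← Real.rpow_add htpos]; congr 1; ring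
        rw [e1, e2]; ring

lemma final_step {ι : Type*} (P : Finset ι) (W u : ι → ℝ) (hW : ∀ p, 0 ≤ W p)
    (hW1 : ∑ p ∈ P, W p = 1) {ε A : ℝ} (hε : 0 < ε)
    (hA : ∑ p ∈ P, ∑ q ∈ P, W p * W q * Real.exp (-Real.pi * ‖u p / ε - u q / ε‖ ^ 2) ≤ ε * A)
    (U : Set ℝ) (hUm : MeasurableSet U) (hUfin : volume U ≠ ∞)
    (hU : ∀ p ∈ P, closedBall (u p) ε ⊆ U) :
    2 ≤ volume.real U * Real.exp (4 * Real.pi) * A := by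
  set I : ι → Set ℝ := fun p => closedBall (u p) ε with hI
  have hIm : ∀ p, MeasurableSet (I p) := fun p => isClosed_closedBall.measurableSet
  have hvol : ∀ p, volume.real (I p) = 2 * ε := fun p => by
    simp only [hI, Real.volume_real_closedBall hε.le]
  set f : ℝ → ℝ := fun x => ∑ p ∈ P, W p * (I p).indicator 1 x with hf
  have hindint : ∀ S : Set ℝ, MeasurableSet S → volume S ≠ ∞ →
      Integrable (S.indicator (1 : ℝ → ℝ)) := fun S hS hS' => by
    rw [integrable_indicator_iff hS]
    exact integrableOn_const hS' (by simp)
  have hIfin : ∀ p, volume (I p) ≠ ∞ := fun p => measure_closedBall_lt_top.ne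
  have hfi : Integrable f := integrable_finsetSum _ fun p _ =>
    (hindint _ (hIm p) (hIfin p)).const_mul _
  have hf2eq : ∀ x, f x ^ 2 = ∑ p ∈ P, ∑ q ∈ P, W p * W q * (I p ∩ I q).indicator 1 x := by
    intro x
    simp only [hf]
    rw [sq, Finset.sum_mul_sum]
    refine Finset.sum_congr rfl fun p _ => Finset.sum_congr rfl fun q _ => ?_
    rw [Set.inter_indicator_one, Pi.mul_apply]; ring
  have hint2 : ∀ p q, Integrable (fun x => W p * W q * (I p ∩ I q).indicator (1 : ℝ → ℝ) x) :=
    fun p q => (hindint _ ((hIm p).inter (hIm q))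
      (measure_ne_top_of_subset inter_subset_left (hIfin p))).const_mul _
  have hf2i : Integrable (fun x => f x ^ 2) := by
    simp_rw [hf2eq]
    exact integrable_finsetSum _ fun p _ => integrable_finsetSum _ fun q _ => hint2 p q
  have hfint : ∫ x, f x = 2 * ε := by
    simp only [hf]
    rw [integral_finsetSum _ fun p _ => (hindint _ (hIm p) (hIfin p)).const_mul _]
    simp_rw [integral_const_mul, integral_indicator_one (hIm _), hvol]
    rw [← Finset.sum_mul, hW1, one_mul]
  have hf2int : ∫ x, f x ^ 2 ≤ 2 * ε * Real.exp (4 * Real.pi) * (ε * A) := by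
    simp_rw [hf2eq]
    rw [integral_finsetSum _ fun p _ => integrable_finsetSum _ fun q _ => hint2 p q]
    simp_rw [integral_finsetSum _ fun q _ => hint2 _ q, integral_const_mul,
      integral_indicator_one ((hIm _).inter (hIm _))]
    refine le_trans ?_ (mul_le_mul_of_nonneg_left hA (by positivity))
    rw [Finset.mul_sum]
    refine Finset.sum_le_sum fun p _ => ?_
    rw [Finset.mul_sum]
    refine Finset.sum_le_sum fun q _ => ?_
    have key : volume.real (I p ∩ I q) ≤
        2 * ε * Real.exp (4 * Real.pi) * Real.exp (-Real.pi * ‖u p / ε - u q / ε‖ ^ 2) := by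
      by_cases hne : (I p ∩ I q).Nonempty
      · obtain ⟨x, hx1, hx2⟩ := hne
        simp only [hI, mem_closedBall] at hx1 hx2
        have h1 : |u p - u q| ≤ 2 * ε := by
          rw [← Real.dist_eq]
          linarith [dist_triangle_left (u p) (u q) x]
        have h2 : ‖u p / ε - u q / ε‖ ≤ 2 := by
          rw [← sub_div, Real.norm_eq_abs, abs_div, abs_of_pos hε, div_le_iff₀ hε]; exact h1
        have h3 : ‖u p / ε - u q / ε‖ ^ 2 ≤ 2 ^ 2 := by gcongr
        have h4 : 1 ≤ Real.exp (4 * Real.pi) * Real.exp (-Real.pi * ‖u p / ε - u q / ε‖ ^ 2) := by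
          rw [← Real.exp_add]
          apply Real.one_le_exp
          nlinarith [Real.pi_pos]
        calc volume.real (I p ∩ I q) ≤ volume.real (I p) :=
              measureReal_mono inter_subset_left (hIfin p)
          _ = 2 * ε := hvol p
          _ ≤ 2 * ε * (Real.exp (4 * Real.pi) * Real.exp (-Real.pi * ‖u p / ε - u q / ε‖ ^ 2)) :=
              le_mul_of_one_le_right (by positivity) h4
          _ = _ := by ring
      · rw [Set.not_nonempty_iff_eq_empty] at hne
        rw [hne, measureReal_empty]
        positivity
    calc W p * W q * volume.real (I p ∩ I q) ≤ W p * W q *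
          (2 * ε * Real.exp (4 * Real.pi) * Real.exp (-Real.pi * ‖u p / ε - u q / ε‖ ^ 2)) :=
          mul_le_mul_of_nonneg_left key (mul_nonneg (hW p) (hW q))
      _ = _ := by ring
  have hUf : IsFiniteMeasure (volume.restrict U) := isFiniteMeasure_restrict.2 hUfin
  have hcs := cs_int (volume.restrict U) f hfi.restrict hf2i.restrict
  have hzero : ∀ x, x ∉ U → f x = 0 := by
    intro x hx
    simp only [hf]
    refine Finset.sum_eq_zero fun p hp => ?_
    rw [Set.indicator_of_notMem (fun h => hx (hU p hp h)), mul_zero]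
  rw [setIntegral_eq_integral_of_forall_compl_eq_zero hzero,
    setIntegral_eq_integral_of_forall_compl_eq_zero (fun x hx => by rw [hzero x hx]; norm_num),
    hfint] at hcs
  have hUr : (volume.restrict U).real univ = volume.real U := by simp
  rw [hUr] at hcs
  have h1 : (2 * ε) ^ 2 ≤ volume.real U * (2 * ε * Real.exp (4 * Real.pi) * (ε * A)) :=
    hcs.trans (mul_le_mul_of_nonneg_left hf2int measureReal_nonneg)
  have h2 : 2 * ε ^ 2 * 2 ≤ 2 * ε ^ 2 * (volume.real U * Real.exp (4 * Real.pi) * A) := by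
    linarith [h1]
  exact le_of_mul_le_mul_left h2 (by positivity)

lemma tail (α ε : ℝ) (hε : 0 < ε) : ∃ T : ℝ, 1 ≤ T ∧ ∀ τ : ℝ, T ≤ |τ| →
    Real.exp (-Real.pi * ‖τ‖ ^ 2) ≤ (1 + |τ / ε|) ^ (-α) := by
  have h := tendsto_rpow_mul_exp_neg_mul_atTop_nhds_zero α ε hε
  have h1 := (h.eventually_le_const (Real.exp_pos (-ε))).and (Filter.eventually_ge_atTop 0)
  obtain ⟨N, hN⟩ := Filter.eventually_atTop.1 h1
  refine ⟨max 1 (ε * N), le_max_left _ _, fun τ hτ => ?_⟩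
  have hτ1 : 1 ≤ |τ| := (le_max_left _ _).trans hτ
  have hτ2 : ε * N ≤ |τ| := (le_max_right _ _).trans hτ
  have hx : N ≤ 1 + |τ / ε| := by
    rw [abs_div, abs_of_pos hε]
    have : N ≤ |τ| / ε := by rw [le_div_iff₀ hε]; linarith
    linarith
  have h2 := (hN _ hx).1
  have hpos : 0 < 1 + |τ / ε| := by positivity
  have e1 : Real.exp (-ε * (1 + |τ / ε|)) = Real.exp (-ε) * Real.exp (-|τ|) := by
    rw [← Real.exp_add]; congr 1
    rw [abs_div, abs_of_pos hε]; field_simp; ring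
  rw [e1] at h2
  have h3 : (1 + |τ / ε|) ^ α * Real.exp (-|τ|) ≤ 1 := by
    have := Real.exp_pos (-ε)
    by_contra hc
    push Not at hc
    nlinarith
  have h4 : Real.exp (-Real.pi * ‖τ‖ ^ 2) ≤ Real.exp (-|τ|) := by
    apply Real.exp_le_exp.2
    rw [Real.norm_eq_abs]
    nlinarith [Real.pi_gt_three]
  refine h4.trans ?_
  rw [Real.rpow_neg hpos.le, ← one_div, le_div_iff₀ (by positivity)]
  linarith

lemma main_bound (d : ℕ) (E : Set (EuclideanSpace ℝ (Fin d))) (hE : IsCompact E) {s : ℝ}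
    (hs : (d + 1 : ℝ) / 2 < s) (h : Measure.hausdorffMeasure s E ≠ 0) :
    ∃ A : ℝ, ∀ ε : ℝ, 0 < ε → ∃ (ι : Type) (P : Finset ι) (W u : ι → ℝ), (∀ p, 0 ≤ W p) ∧
      ∑ p ∈ P, W p = 1 ∧
      (∀ p ∈ P, ∃ x ∈ E, ∃ y ∈ E, u p = dist x y ^ 2) ∧
      ∑ p ∈ P, ∑ q ∈ P, W p * W q * Real.exp (-Real.pi * ‖u p / ε - u q / ε‖ ^ 2) ≤ ε * A := by
  have hs0 : 0 < s := lt_trans (by positivity) hs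
  obtain ⟨C, hC, hfro⟩ := frostman hE hs0 h
  obtain ⟨R0, hR0⟩ := hE.isBounded.exists_norm_le
  set R := max 1 R0 with hR
  obtain ⟨K, η, hK, hη, hexp⟩ := expsum_bound d (R := R) (s := s) (le_max_left _ _) hC
  set α := 2 * s - d with hα
  have hα1 : 1 < α := by rw [hα]; linarith
  set K1 := (K + 1) * 2 ^ α with hK1
  have h2α : (1:ℝ) ≤ 2 ^ α := Real.one_le_rpow (by norm_num) (by linarith)
  have hK1' : 1 ≤ K1 := by rw [hK1]; nlinarith
  refine ⟨K1 * ∫ t : ℝ, (1 + ‖t‖) ^ (-α), fun ε hε => ?_⟩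
  obtain ⟨T, hT1, hT⟩ := tail α ε hε
  obtain ⟨F, w, hFE, hw0, hw1, hF⟩ := hfro (η * ε / T) (by positivity)
  have hWW : ∑ p ∈ F ×ˢ F, w p.1 * w p.2 = 1 := by
    rw [Finset.sum_product, ← Finset.sum_mul_sum, hw1, one_mul]
  set W : EuclideanSpace ℝ (Fin d) × EuclideanSpace ℝ (Fin d) → ℝ := fun p => w p.1 * w p.2 with hW
  set u : EuclideanSpace ℝ (Fin d) × EuclideanSpace ℝ (Fin d) → ℝ :=
    fun p => dist p.1 p.2 ^ 2 with hu
  have hW0 : ∀ p, 0 ≤ W p := fun p => mul_nonneg (hw0 _) (hw0 _)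
  refine ⟨_, F ×ˢ F, W, u, hW0, hWW, ?_, ?_⟩
  · intro p hp
    rw [Finset.mem_product] at hp
    exact ⟨p.1, hFE hp.1, p.2, hFE hp.2, rfl⟩
  have hgf := gauss_form (V := ℝ) (F ×ˢ F) (fun p => u p / ε) (fun p => (W p : ℂ))
  set g : ℝ → ℝ := fun z => Real.exp (-Real.pi * ‖z‖ ^ 2) *
      ‖∑ p ∈ F ×ˢ F, (W p : ℂ) *
        Complex.exp ((2 * Real.pi * inner ℝ (u p / ε) z : ℝ) * Complex.I)‖ ^ 2 with hg
  have hsum : ∑ p ∈ F ×ˢ F, ∑ q ∈ F ×ˢ F,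
      W p * W q * Real.exp (-Real.pi * ‖u p / ε - u q / ε‖ ^ 2) = ∫ z, g z := by
    have h1 := hgf.2
    simp only [Complex.conj_ofReal] at h1
    exact_mod_cast h1.symm
  rw [hsum]
  set S : ℝ → ℂ := fun t => ∑ x ∈ F, ∑ y ∈ F, (w x * w y : ℝ) * ee (t * dist x y ^ 2) with hS
  have hgS : ∀ z, g z = Real.exp (-Real.pi * ‖z‖ ^ 2) * ‖S (z / ε)‖ ^ 2 := by
    intro z
    simp only [hg, hS]
    rw [Finset.sum_product]
    congr 4
    ext x
    refine Finset.sum_congr rfl fun y _ => ?_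
    simp only [hW, hu, ee]
    congr 5
    simp
    ring
  have hS1 : ∀ t, ‖S t‖ ≤ 1 := by
    intro t
    simp only [hS]
    calc _ ≤ ∑ x ∈ F, ∑ y ∈ F, ‖((w x * w y : ℝ) : ℂ) * ee (t * dist x y ^ 2)‖ :=
          (norm_sum_le _ _).trans (Finset.sum_le_sum fun x _ => norm_sum_le _ _)
      _ = ∑ x ∈ F, ∑ y ∈ F, w x * w y := by
          refine Finset.sum_congr rfl fun x _ => Finset.sum_congr rfl fun y _ => ?_
          rw [norm_mul, norm_ee, Complex.norm_real,
            Real.norm_of_nonneg (mul_nonneg (hw0 _) (hw0 _)), mul_one]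
      _ = 1 := by rw [← Finset.sum_mul_sum, hw1, one_mul]
  have hS1' : ∀ t, ‖S t‖ ^ 2 ≤ 1 := fun t => pow_le_one₀ (norm_nonneg _) (hS1 t)
  have hgle : ∀ z, g z ≤ K1 * (1 + ‖z / ε‖) ^ (-α) := by
    intro z
    rw [hgS, Real.norm_eq_abs (z / ε)]
    have hpos : 0 < 1 + |z / ε| := by positivity
    have hepos := Real.exp_pos (-Real.pi * ‖z‖ ^ 2)
    have hele : Real.exp (-Real.pi * ‖z‖ ^ 2) ≤ 1 := Real.exp_le_one_iff.2 (by
      nlinarith [Real.pi_pos, sq_nonneg ‖z‖])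
    by_cases hz : T ≤ |z|
    · calc _ ≤ Real.exp (-Real.pi * ‖z‖ ^ 2) * 1 := by gcongr; exact hS1' _
        _ ≤ (1 + |z / ε|) ^ (-α) := by rw [mul_one]; exact hT z hz
        _ ≤ _ := le_mul_of_one_le_left (by positivity) hK1'
    push Not at hz
    have hle : ‖S (z / ε)‖ ^ 2 ≤ K1 * (1 + |z / ε|) ^ (-α) := by
      by_cases h1 : 1 ≤ |z / ε|
      · have h2 := hexp (η * ε / T) F w hw0 hw1
          (fun x hx => (hR0 x (hFE hx)).trans (le_max_right _ _)) hF (z / ε) h1 (by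
            rw [abs_div, abs_of_pos hε]
            have : η * ε / T * (|z| / ε) = η * (|z| / T) := by field_simp
            rw [this]
            have : |z| / T ≤ 1 := by rw [div_le_one (by linarith)]; exact hz.le
            nlinarith)
        refine h2.trans ?_
        have e1 : (d : ℝ) - 2 * s = -α := by rw [hα]; ring
        rw [e1, hK1]
        have h3 : |z / ε| ^ (-α) ≤ 2 ^ α * (1 + |z / ε|) ^ (-α) := by
          have h4 : (2 * |z / ε|) ^ (-α) ≤ (1 + |z / ε|) ^ (-α) :=
            Real.rpow_le_rpow_of_nonpos hpos (by linarith) (by linarith)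
          rw [Real.mul_rpow (by norm_num) (by positivity), Real.rpow_neg (by norm_num)] at h4
          rwa [inv_mul_le_iff₀ (by positivity)] at h4
        calc K * |z / ε| ^ (-α) ≤ (K + 1) * (2 ^ α * (1 + |z / ε|) ^ (-α)) := by
              gcongr; linarith
          _ = _ := by ring
      · push Not at h1
        refine (hS1' _).trans ?_
        have h4 : (2 : ℝ) ^ (-α) ≤ (1 + |z / ε|) ^ (-α) :=
          Real.rpow_le_rpow_of_nonpos hpos (by linarith) (by linarith)
        rw [Real.rpow_neg (by norm_num), ← one_div, div_le_iff₀ (by positivity)] at h4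
        rw [hK1]
        have : 0 ≤ (1 + |z / ε|) ^ (-α) * 2 ^ α := by positivity
        nlinarith
    calc _ ≤ 1 * ‖S (z / ε)‖ ^ 2 := by gcongr
      _ ≤ _ := by rw [one_mul]; exact hle
  have hJ : Integrable (fun t : ℝ => (1 + ‖t‖) ^ (-α)) :=
    integrable_one_add_norm (by simpa using hα1)
  have hJ2 : Integrable (fun z : ℝ => K1 * (1 + ‖z / ε‖) ^ (-α)) :=
    (hJ.comp_div hε.ne').const_mul _
  calc ∫ z, g z ≤ ∫ z, K1 * (1 + ‖z / ε‖) ^ (-α) := integral_mono hgf.1 hJ2 hgle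
    _ = _ := by
      rw [integral_const_mul, Measure.integral_comp_div (fun t : ℝ => (1 + ‖t‖) ^ (-α)) ε,
        abs_of_pos hε, smul_eq_mul]
      ring

end FalconerAux

theorem stmt15 (d : ℕ) (hd : 2 ≤ d) (E : Set (Pt d)) (hE : IsCompact E)
    (hdim : ((d : ℝ≥0∞) + 1) / 2 < dimH E) :
    0 < volume (distSet d E) := by
  by_contra hneg
  have hzero : volume (distSet d E) = 0 := by simpa using hneg
  obtain ⟨s, hs1, hs2⟩ := ENNReal.lt_iff_exists_nnreal_btwn.1 hdim
  have hs : ((d : ℝ) + 1) / 2 < s := by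
    have h1 := (ENNReal.toReal_lt_toReal hs1.ne_top ENNReal.coe_ne_top).2 hs1
    rw [ENNReal.toReal_div, ENNReal.toReal_add (by simp) (by simp)] at h1
    simpa using h1
  have hH : Measure.hausdorffMeasure (s : ℝ) E ≠ 0 := by
    have h1 := hausdorffMeasure_of_lt_dimH hs2
    rw [h1]; exact ENNReal.top_ne_zero
  obtain ⟨A, hA⟩ := FalconerAux.main_bound d E hE hs hH
  set K : Set ℝ := (fun r : ℝ => r ^ 2) '' distSet d E with hK
  have hK0 : volume K = 0 := addHaar_image_eq_zero_of_differentiableOn_of_addHaar_eq_zero volume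
    (by fun_prop) hzero
  have hKc : IsCompact K := by
    have h1 : distSet d E = (fun p : Pt d × Pt d => dist p.1 p.2) '' (E ×ˢ E) := by
      ext r
      simp only [distSet, Set.mem_ofPred_eq, Set.mem_image, Set.mem_prod, Prod.exists]
      constructor
      · rintro ⟨x, hx, y, hy, h⟩; exact ⟨x, y, ⟨hx, hy⟩, h⟩
      · rintro ⟨x, y, ⟨hx, hy⟩, h⟩; exact ⟨x, hx, y, hy, h⟩
    rw [hK, h1]
    exact ((hE.prod hE).image continuous_dist).image (by fun_prop)
  have hlim := tendsto_measure_cthickening_of_isCompact (μ := volume) hKc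
  rw [hK0] at hlim
  have hfin : ∀ ε, volume (cthickening ε K) ≠ ∞ := fun ε =>
    hKc.isBounded.cthickening.measure_lt_top.ne
  have hlimR : Filter.Tendsto (fun ε => volume.real (cthickening ε K)) (𝓝 0) (𝓝 0) := by
    have := (ENNReal.tendsto_toReal ENNReal.zero_ne_top).comp hlim
    rw [ENNReal.toReal_zero] at this
    exact this
  have hlim2 : Filter.Tendsto
      (fun ε => volume.real (cthickening ε K) * Real.exp (4 * Real.pi) * A) (𝓝[>] 0) (𝓝 0) := by
    have := ((hlimR.mul_const (Real.exp (4 * Real.pi))).mul_const A).mono_left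
      (nhdsWithin_le_nhds (s := Set.Ioi 0))
    simpa using this
  have hge : ∀ᶠ ε in 𝓝[>] (0 : ℝ),
      2 ≤ volume.real (cthickening ε K) * Real.exp (4 * Real.pi) * A := by
    filter_upwards [self_mem_nhdsWithin] with ε hε
    obtain ⟨ι, P, W, u, hW0, hW1, hu, hsum⟩ := hA ε hε
    refine FalconerAux.final_step P W u hW0 hW1 hε hsum _ isClosed_cthickening.measurableSet
      (hfin ε) ?_
    intro p hp
    obtain ⟨x, hx, y, hy, he⟩ := hu p hp
    apply closedBall_subset_cthickening
    exact ⟨dist x y, ⟨x, hx, y, hy, rfl⟩, he.symm⟩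
  have := ge_of_tendsto hlim2 hge
  norm_num at this
end
end

section
/- For every ε > 0 there exists a constant C_ε such that for every positive integer q, the number of congruence classes of triangles with vertices in the lattice grid ℤ² ∩ [0,q]² is at most C_ε q^{4+ε}; equivalently, the number of distinct triples (|x−y|, |x−z|, |y−z|) arising (up to permutation of the three entries) from points x, y, z ∈ ℤ² ∩ [0,q]² is at most C_ε q^{4+ε}. -/
open MeasureTheory Metric Set Topology
open scoped ENNReal

noncomputable section

/-- `ℝ²` as Euclidean space. -/
abbrev Pt2 := EuclideanSpace ℝ (Fin 2)

/-- The point of `ℝ²` with the given integer coordinates. -/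
def toPt2 (x : Fin 2 → ℤ) : Pt2 :=
  (EuclideanSpace.equiv (Fin 2) ℝ).symm fun i => (x i : ℝ)

/-- The set of congruence classes of triangles with vertices in `ℤ² ∩ [0,q]²`, encoded as
the set of unordered triples (multisets) of pairwise distances `{|x-y|, |x-z|, |y-z|}`. -/
def triangleClasses (q : ℕ) : Set (Multiset ℝ) :=
  {m | ∃ x y z : Fin 2 → ℤ,
    (∀ i, x i ∈ Icc (0 : ℤ) q) ∧ (∀ i, y i ∈ Icc (0 : ℤ) q) ∧ (∀ i, z i ∈ Icc (0 : ℤ) q) ∧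
    m = {dist (toPt2 x) (toPt2 y), dist (toPt2 x) (toPt2 z), dist (toPt2 y) (toPt2 z)}}

lemma dist_toPt2 (x y : Fin 2 → ℤ) : dist (toPt2 x) (toPt2 y) = ‖toPt2 (y - x)‖ := by
  rw [dist_comm, dist_eq_norm]
  congr 1
  ext i
  simp [toPt2]

/-- The class of the triangle `0, u, v`. -/
def clsOf (p : (Fin 2 → ℤ) × (Fin 2 → ℤ)) : Multiset ℝ :=
  {‖toPt2 p.1‖, ‖toPt2 p.2‖, ‖toPt2 (p.2 - p.1)‖}

/-- The box of differences. -/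
def box (q : ℕ) : Finset (Fin 2 → ℤ) :=
  Fintype.piFinset fun _ => Finset.Icc (-(q : ℤ)) q

lemma card_box (q : ℕ) : (box q).card = (2 * q + 1) ^ 2 := by
  have h : ((q : ℤ) + 1 - -(q : ℤ)).toNat = 2 * q + 1 := by omega
  simp only [box, Fintype.card_piFinset, Int.card_Icc, Finset.prod_const, Finset.card_univ,
    Fintype.card_fin, h]

lemma classes_subset (q : ℕ) :
    triangleClasses q ⊆ ((((box q) ×ˢ (box q)).image clsOf : Finset (Multiset ℝ)) :
      Set (Multiset ℝ)) := by
  rintro m ⟨x, y, z, hx, hy, hz, rfl⟩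
  rw [Finset.mem_coe, Finset.mem_image]
  refine ⟨(y - x, z - x), ?_, ?_⟩
  · simp only [Finset.mem_product, box, Fintype.mem_piFinset, Finset.mem_Icc, Pi.sub_apply]
    refine ⟨fun i => ?_, fun i => ?_⟩
    · have := hx i; have := hy i; simp only [Set.mem_Icc] at *; omega
    · have := hx i; have := hz i; simp only [Set.mem_Icc] at *; omega
  · simp only [clsOf, dist_toPt2, sub_sub_sub_cancel_right]

theorem stmt16 (ε : ℝ) (hε : 0 < ε) :
    ∃ C : ℝ, ∀ q : ℕ, 0 < q →
      ((triangleClasses q).ncard : ℝ) ≤ C * (q : ℝ) ^ ((4 : ℝ) + ε) := by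
  refine ⟨81, fun q hq => ?_⟩
  have hq1 : (1 : ℝ) ≤ q := by exact_mod_cast hq
  have h1 : (triangleClasses q).ncard ≤ (2 * q + 1) ^ 2 * (2 * q + 1) ^ 2 := by
    refine (Set.ncard_le_ncard (classes_subset q) (Finset.finite_toSet _)).trans ?_
    rw [Set.ncard_coe_finset]
    refine Finset.card_image_le.trans ?_
    rw [Finset.card_product, card_box]
  have h2 : ((triangleClasses q).ncard : ℝ) ≤ (2 * q + 1) ^ 2 * (2 * q + 1) ^ 2 := by
    exact_mod_cast h1
  have h3 : (2 * (q : ℝ) + 1) ^ 2 * (2 * q + 1) ^ 2 ≤ 81 * (q : ℝ) ^ 4 := by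
    calc (2 * (q : ℝ) + 1) ^ 2 * (2 * q + 1) ^ 2 = (2 * (q : ℝ) + 1) ^ 4 := by ring
      _ ≤ (3 * (q : ℝ)) ^ 4 := by gcongr; linarith
      _ = 81 * (q : ℝ) ^ 4 := by ring
  have h4 : (q : ℝ) ^ 4 ≤ (q : ℝ) ^ ((4 : ℝ) + ε) := by
    rw [← Real.rpow_natCast]
    apply Real.rpow_le_rpow_of_exponent_le hq1
    push_cast
    linarith
  linarith
end
end

section
/- Let d ≥ 2, 1 ≤ k ≤ d, let E ⊂ ℝ^d be compact, let μ be a finite nonnegative Borel measure supported on E, and let ν be the measure on ℝ^{k(k+1)/2} defined by ∫ f(t) dν(t) = ∫⋯∫ f((|x^i − x^j|)_{1≤i<j≤k+1}) dμ(x^1)⋯dμ(x^{k+1}). If liminf_{ε→0} ε^{−k(k+1)/2} μ^{2(k+1)}{ (x^1,…,x^{k+1}, y^1,…,y^{k+1}) ∈ (ℝ^d)^{2(k+1)} : | |x^i−x^j| − |y^i−y^j| | ≤ ε for all 1 ≤ i < j ≤ k+1 } is finite, then ν is absolutely continuous with respect to Lebesgue measure on ℝ^{k(k+1)/2} with an L²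 density ν(t), and ∫ ν(t)² dt ≤ c_{k,d} times that liminf, for a constant c_{k,d} depending only on k and d. -/
open MeasureTheory Metric Set Topology
open scoped ENNReal

noncomputable section

/-- The measure `ν` on `ℝ^{k(k+1)/2}` determined by
`∫ f dν = ∫⋯∫ f((|xⁱ - xʲ|)_{i<j}) dμ(x¹)⋯dμ(x^{k+1})`, i.e. the pushforward of
`μ^{k+1}` under the pairwise-distance map. -/
def nuSimplex (d k : ℕ) (μ : Measure (Pt d)) : Measure (PairIdx k → ℝ) :=
  Measure.map (simplexMap d k) (Measure.pi fun _ : Fin (k+1) => μ)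

/-- The set of pairs of `(k+1)`-tuples `(x, y)` whose corresponding pairwise distances
all agree up to `ε`. -/
def approxCongr (d k : ℕ) (ε : ℝ) :
    Set ((Fin (k+1) → Pt d) × (Fin (k+1) → Pt d)) :=
  {z | ∀ i j : Fin (k+1), i < j → |dist (z.1 i) (z.1 j) - dist (z.2 i) (z.2 j)| ≤ ε}

/-- `liminf_{ε → 0⁺} ε^{-k(k+1)/2} μ^{2(k+1)} {(x, y) : ||xⁱ-xʲ| - |yⁱ-yʲ|| ≤ ε ∀ i<j}`,
where `μ^{2(k+1)}` is the product of `2(k+1)` copies of `μ`. -/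
def thickLiminf (d k : ℕ) (μ : Measure (Pt d)) : ℝ≥0∞ :=
  Filter.liminf
    (fun ε : ℝ => (ENNReal.ofReal ε)⁻¹ ^ (k * (k+1) / 2) *
      ((Measure.pi fun _ : Fin (k+1) => μ).prod (Measure.pi fun _ : Fin (k+1) => μ))
        (approxCongr d k ε))
    (𝓝[>] (0 : ℝ))

lemma card_pairIdx (k : ℕ) : Fintype.card (PairIdx k) = k * (k+1) / 2 := by
  have h : Fintype.card (PairIdx k) = ∑ j : Fin (k+1), (j : ℕ) := by
    rw [Fintype.card_subtype, Finset.card_filter, Fintype.sum_prod_type_right]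
    refine Finset.sum_congr rfl fun j _ => ?_
    rw [← Finset.card_filter]
    have : (Finset.univ.filter fun x : Fin (k+1) => x < j) = Finset.Iio j := by ext; simp
    exact (congrArg Finset.card this).trans (Fin.card_Iio j)
  rw [h, Fin.sum_univ_eq_sum_range (fun i => i), Finset.sum_range_id, Nat.add_sub_cancel, mul_comm]

section
variable {ι : Type*} [Fintype ι]

lemma meas_ball (ν : Measure (ι → ℝ)) [IsFiniteMeasure ν] (r : ℝ) :
    Measurable fun t => ν (closedBall t r) := by
  have hS : MeasurableSet {p : (ι → ℝ) × (ι → ℝ) | dist p.2 p.1 ≤ r} :=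
    (isClosed_le (by fun_prop) (by fun_prop)).measurableSet
  exact measurable_measure_prodMk_left hS

lemma sq_bound (ν : Measure (ι → ℝ)) [IsFiniteMeasure ν] (r : ℝ) (hr : 0 < r) :
    ∫⁻ t, (ν (closedBall t r)) ^ 2 ≤ ENNReal.ofReal (2*r) ^ Fintype.card ι *
      (ν.prod ν) {p | dist p.1 p.2 ≤ 2 * r} := by
  set S : Set ((ι → ℝ) × ((ι → ℝ) × (ι → ℝ))) :=
    {p | dist p.2.1 p.1 ≤ r ∧ dist p.2.2 p.1 ≤ r} with hSd
  have hS : MeasurableSet S :=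
    (measurableSet_le (f := fun p : (ι → ℝ) × ((ι → ℝ) × (ι → ℝ)) => dist p.2.1 p.1)
      (by fun_prop) measurable_const).inter
    (measurableSet_le (f := fun p : (ι → ℝ) × ((ι → ℝ) × (ι → ℝ)) => dist p.2.2 p.1)
      (by fun_prop) measurable_const)
  have hD : MeasurableSet {p : (ι → ℝ) × (ι → ℝ) | dist p.1 p.2 ≤ 2 * r} :=
    (isClosed_le (by fun_prop) (by fun_prop)).measurableSet
  calc ∫⁻ t, (ν (closedBall t r)) ^ 2 = (volume.prod (ν.prod ν)) S := by
        rw [Measure.prod_apply hS]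
        refine lintegral_congr fun t => ?_
        rw [sq, ← Measure.prod_prod]
        rfl
    _ = ∫⁻ z, volume ((fun t => (t, z)) ⁻¹' S) ∂(ν.prod ν) := Measure.prod_apply_symm hS
    _ ≤ ∫⁻ z, ({p : (ι → ℝ) × (ι → ℝ) | dist p.1 p.2 ≤ 2 * r}.indicator
          (fun _ => ENNReal.ofReal (2*r) ^ Fintype.card ι)) z ∂(ν.prod ν) := by
        refine lintegral_mono fun z => ?_
        by_cases hz : dist z.1 z.2 ≤ 2 * r
        · rw [indicator_of_mem (by exact hz), ← ENNReal.ofReal_pow (by positivity),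
            ← Real.volume_pi_closedBall z.1 hr.le]
          refine measure_mono fun t ht => ?_
          rw [mem_closedBall, dist_comm]
          exact ht.1
        · have : (fun t => (t, z)) ⁻¹' S = ∅ := by
            rw [eq_empty_iff_forall_notMem]
            rintro t ⟨h1, h2⟩
            apply hz
            have := dist_triangle_right z.1 z.2 t
            simp only at h1 h2
            linarith
          rw [this]; simp
    _ = _ := by rw [lintegral_indicator hD, setLIntegral_const]

/-- normalized -/
lemma sq_bound' (ν : Measure (ι → ℝ)) [IsFiniteMeasure ν] (r : ℝ) (hr : 0 < r) :
    ∫⁻ t, (ν (closedBall t r) / volume (closedBall t r)) ^ 2 ≤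
      (ENNReal.ofReal (2*r))⁻¹ ^ Fintype.card ι *
      (ν.prod ν) {p | dist p.1 p.2 ≤ 2 * r} := by
  set V := ENNReal.ofReal (2*r) ^ Fintype.card ι with hV
  have hV0 : V ≠ 0 := pow_ne_zero _ (by simpa using hr)
  have hVt : V ≠ ⊤ := ENNReal.pow_ne_top ENNReal.ofReal_ne_top
  have hvol : ∀ t : ι → ℝ, volume (closedBall t r) = V := fun t => by
    rw [Real.volume_pi_closedBall t hr.le, ENNReal.ofReal_pow (by positivity)]
  simp_rw [hvol, div_eq_mul_inv, mul_pow]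
  rw [lintegral_mul_const _ ((meas_ball ν r).pow_const 2),
    ← ENNReal.inv_pow (a := ENNReal.ofReal (2*r)), ← hV]
  calc _ ≤ (V * (ν.prod ν) {p | dist p.1 p.2 ≤ 2 * r}) * V⁻¹ ^ 2 := by
        gcongr; exact sq_bound ν r hr
    _ = (V * V⁻¹) * (V⁻¹ * (ν.prod ν) {p | dist p.1 p.2 ≤ 2 * r}) := by ring
    _ = _ := by rw [ENNReal.mul_inv_cancel hV0 hVt, one_mul]

lemma open_bound (ν : Measure (ι → ℝ)) [IsFiniteMeasure ν] (u : ℕ → ℝ) (hu0 : ∀ n, 0 < u n)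
    (hu : Filter.Tendsto u Filter.atTop (𝓝 0)) (U : Set (ι → ℝ)) (hU : IsOpen U) :
    ν U ≤ Filter.liminf (fun n => ∫⁻ t in U, ν (closedBall t (u n)) /
      volume (closedBall t (u n))) Filter.atTop := by
  have key : ∀ n, ∫⁻ t in U, ν (closedBall t (u n)) / volume (closedBall t (u n))
      = ∫⁻ s, volume (U ∩ closedBall s (u n)) / volume (closedBall s (u n)) ∂ν := by
    intro n
    have hvol : ∀ t : ι → ℝ, volume (closedBall t (u n)) = ENNReal.ofReal ((2 * u n) ^ Fintype.card ι) :=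
      fun t => Real.volume_pi_closedBall t (hu0 n).le
    have hS : MeasurableSet {p : (ι → ℝ) × (ι → ℝ) | dist p.2 p.1 ≤ u n} :=
      (isClosed_le (by fun_prop) (by fun_prop)).measurableSet
    have hS' := hS.inter (hU.measurableSet.preimage measurable_fst)
    simp_rw [hvol, div_eq_mul_inv]
    rw [lintegral_mul_const _ (meas_ball ν _), lintegral_mul_const]
    · congr 1
      have h1 := Measure.prod_apply (μ := volume.restrict U) (ν := ν) hS
      have h2 := Measure.prod_apply_symm (μ := volume.restrict U) (ν := ν) hS
      refine (h1.symm.trans h2).trans (lintegral_congr fun s => ?_)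
      rw [Measure.restrict_apply (measurable_prodMk_right hS), inter_comm]
      congr 2
      ext t
      simp [dist_comm]
    · convert measurable_measure_prodMk_right (μ := (volume : Measure (ι → ℝ))) hS' using 3 with s
      ext t
      simp [dist_comm, and_comm]
  have hm : ∀ n, Measurable fun s => volume (U ∩ closedBall s (u n)) / volume (closedBall s (u n)) := by
    intro n
    have hvol : ∀ t : ι → ℝ, volume (closedBall t (u n)) = ENNReal.ofReal ((2 * u n) ^ Fintype.card ι) :=
      fun t => Real.volume_pi_closedBall t (hu0 n).le
    have hS : MeasurableSet {p : (ι → ℝ) × (ι → ℝ) | dist p.2 p.1 ≤ u n} :=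
      (isClosed_le (by fun_prop) (by fun_prop)).measurableSet
    have hS' := hS.inter (hU.measurableSet.preimage measurable_fst)
    simp_rw [hvol]
    refine Measurable.div_const ?_ _
    convert measurable_measure_prodMk_right (μ := (volume : Measure (ι → ℝ))) hS' using 3 with s
    ext t
    simp [dist_comm, and_comm]
  simp_rw [key]
  refine le_trans ?_ (lintegral_liminf_le hm)
  rw [← lintegral_indicator_one hU.measurableSet]
  refine lintegral_mono fun s => ?_
  by_cases hs : s ∈ U
  · rw [indicator_of_mem hs]
    refine Filter.le_liminf_of_le (by isBoundedDefault) ?_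
    obtain ⟨δ, hδ, hb⟩ := Metric.isOpen_iff.1 hU s hs
    filter_upwards [hu.eventually (gt_mem_nhds hδ)] with n hn
    have : U ∩ closedBall s (u n) = closedBall s (u n) :=
      inter_eq_right.2 ((closedBall_subset_ball hn).trans hb)
    rw [this, ENNReal.div_self]
    · rfl
    · exact (Metric.measure_closedBall_pos _ _ (hu0 n)).ne'
    · exact measure_closedBall_lt_top.ne
  · simp [hs]

lemma main_abs (ν : Measure (ι → ℝ)) [IsFiniteMeasure ν] (C : ℝ≥0∞) (hC : C ≠ ⊤)
    (u : ℕ → ℝ) (hu0 : ∀ n, 0 < u n)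
    (hu : Filter.Tendsto u Filter.atTop (𝓝 0))
    (hb : ∀ n, ∫⁻ t, (ν (closedBall t (u n)) / volume (closedBall t (u n))) ^ 2 ≤ C) :
    ν ≪ volume ∧ ∫⁻ t, (ν.rnDeriv volume t) ^ 2 ≤ C := by
  have hvol : ∀ n, ∀ t : ι → ℝ, volume (closedBall t (u n)) = ENNReal.ofReal ((2 * u n) ^ Fintype.card ι) :=
      fun n t => Real.volume_pi_closedBall t (hu0 n).le
  have hm : ∀ n, Measurable fun t => ν (closedBall t (u n)) / volume (closedBall t (u n)) := by
    intro n
    simp_rw [hvol]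
    exact (meas_ball ν _).div_const _
  constructor
  · intro A hA
    have h1 : ∀ M : ℕ, ν A ≤ C / ((M : ℝ≥0∞) + 1) := by
      intro M
      set m : ℝ≥0∞ := (M : ℝ≥0∞) + 1 with hmdef
      have hm0 : m ≠ 0 := by simp [hmdef]
      have hmt : m ≠ ⊤ := by simp [hmdef]
      have hpt : ∀ a : ℝ≥0∞, a ≤ m + a ^ 2 / m := by
        intro a
        rcases le_total a m with h | h
        · exact h.trans le_self_add
        · refine le_trans ?_ le_add_self
          rw [ENNReal.le_div_iff_mul_le (Or.inl hm0) (Or.inl hmt), sq]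
          gcongr
      refine ENNReal.le_of_forall_pos_le_add fun η hη _ => ?_
      have hlt : volume A < (η : ℝ≥0∞) / m := by
        rw [hA]
        exact ENNReal.div_pos (by exact_mod_cast hη.ne') hmt
      obtain ⟨U, hAU, hU, hUv⟩ := Set.exists_isOpen_lt_of_lt A _ hlt
      refine (measure_mono hAU).trans ((open_bound ν u hu0 hu U hU).trans ?_)
      refine Filter.liminf_le_of_le (by isBoundedDefault) ?_
      intro b hbb
      obtain ⟨n, hn⟩ := hbb.exists
      refine hn.trans ?_
      calc _ ≤ ∫⁻ t in U, (m + (ν (closedBall t (u n)) / volume (closedBall t (u n))) ^ 2 / m) :=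
            lintegral_mono fun t => hpt _
        _ = m * volume U + (∫⁻ t in U, (ν (closedBall t (u n)) / volume (closedBall t (u n))) ^ 2) / m := by
            rw [lintegral_add_left measurable_const, setLIntegral_const]
            simp_rw [div_eq_mul_inv _ m]
            rw [lintegral_mul_const _ ((hm n).pow_const 2)]
        _ ≤ m * (η / m) + C / m := by
            gcongr
            exact (setLIntegral_le_lintegral _ _).trans (hb n)
        _ = C / m + η := by rw [ENNReal.mul_div_cancel hm0 hmt, add_comm]
    have h2 : Filter.Tendsto (fun M : ℕ => C / ((M : ℝ≥0∞) + 1)) Filter.atTop (𝓝 0) := by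
      have := (ENNReal.Tendsto.const_div (a := C) ENNReal.tendsto_nat_nhds_top (Or.inr hC)).comp
        (Filter.tendsto_add_atTop_nat 1)
      simpa [Function.comp_def] using this
    exact le_antisymm (ge_of_tendsto' h2 h1) bot_le
  · have hae := Besicovitch.ae_tendsto_rnDeriv ν (volume : Measure (ι → ℝ))
    have hu' : Filter.Tendsto u Filter.atTop (𝓝[>] 0) :=
      tendsto_nhdsWithin_iff.2 ⟨hu, Filter.Eventually.of_forall hu0⟩
    calc _ = ∫⁻ t, Filter.liminf (fun n => (ν (closedBall t (u n)) / volume (closedBall t (u n))) ^ 2) Filter.atTop := by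
          refine lintegral_congr_ae ?_
          filter_upwards [hae] with t ht
          exact (((ENNReal.continuous_pow 2).tendsto _).comp (ht.comp hu')).liminf_eq.symm
      _ ≤ _ := lintegral_liminf_le fun n => (hm n).pow_const 2
      _ ≤ C := by
          refine Filter.liminf_le_of_le (by isBoundedDefault) ?_
          intro b hbb
          obtain ⟨n, hn⟩ := hbb.exists
          exact hn.trans (hb n)
end

theorem stmt17 (d k : ℕ) (hd : 2 ≤ d) (hk1 : 1 ≤ k) (hkd : k ≤ d) :
    ∃ c : ℝ≥0∞, c ≠ ⊤ ∧
      ∀ (E : Set (Pt d)), IsCompact E →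
        ∀ (μ : Measure (Pt d)), IsFiniteMeasure μ → μ Eᶜ = 0 →
          thickLiminf d k μ < ⊤ →
            nuSimplex d k μ ≪ volume ∧
              ∫⁻ t, ((nuSimplex d k μ).rnDeriv volume t) ^ 2 ∂volume ≤
                c * thickLiminf d k μ := by
  refine ⟨1, ENNReal.one_ne_top, ?_⟩
  intro E _ μ hμ _ hL
  have hmeas : Measurable (simplexMap d k) := by
    unfold simplexMap
    fun_prop
  set P := Measure.pi fun _ : Fin (k+1) => μ with hP
  haveI : IsFiniteMeasure (nuSimplex d k μ) := by
    unfold nuSimplex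
    infer_instance
  have key : ∀ C : ℝ≥0∞, C ≠ ⊤ → thickLiminf d k μ < C →
      nuSimplex d k μ ≪ volume ∧
        ∫⁻ t, ((nuSimplex d k μ).rnDeriv volume t) ^ 2 ∂volume ≤ C := by
    intro C hC hlt
    have hf := (Filter.frequently_lt_of_liminf_lt (by isBoundedDefault) hlt).and_eventually
      self_mem_nhdsWithin
    obtain ⟨u, hu, hb⟩ := Filter.exists_seq_forall_of_frequently hf
    have hpos : ∀ n, 0 < u n := fun n => (hb n).2
    have hu0 : Filter.Tendsto u Filter.atTop (𝓝 0) := hu.mono_right nhdsWithin_le_nhds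
    refine main_abs _ C hC (fun n => u n / 2) (fun n => half_pos (hpos n))
      (by simpa using hu0.div_const 2) fun n => ?_
    refine (sq_bound' _ _ (half_pos (hpos n))).trans ?_
    have h2 : 2 * (u n / 2) = u n := by ring
    rw [h2, card_pairIdx]
    refine le_trans (le_of_eq ?_) (hb n).1.le
    congr 1
    have hD : MeasurableSet {p : (PairIdx k → ℝ) × (PairIdx k → ℝ) | dist p.1 p.2 ≤ u n} :=
      (isClosed_le (by fun_prop) (by fun_prop)).measurableSet
    unfold nuSimplex
    rw [Measure.map_prod_map _ _ hmeas hmeas, Measure.map_apply (hmeas.prodMap hmeas) hD]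
    congr 1
    ext z
    simp only [mem_preimage, mem_setOf_eq, Prod.map_fst, Prod.map_snd,
      dist_pi_le_iff (hpos n).le, approxCongr, simplexMap, Real.dist_eq]
    constructor
    · intro h i j hij
      exact h ⟨(i, j), hij⟩
    · intro h p
      exact h _ _ p.2
  obtain ⟨C, hC1, hC2⟩ := ENNReal.lt_iff_exists_nnreal_btwn.1 hL
  refine ⟨(key C ENNReal.coe_ne_top hC1).1, ?_⟩
  rw [one_mul]
  refine le_of_forall_gt_imp_ge_of_dense fun D hD => ?_
  by_cases hDt : D = ⊤
  · rw [hDt]; exact le_top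
  · exact (key D hDt hD).2
end
end
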